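/- arXiv:1606.08621 — 4 statements merged into one kernel-verified Lean document; each statement's English description precedes it below -/
import Mathlib

section
/- Let G be the parallel composition of r ≥ 2 paths of lengths k_1,...,k_r, where the integers k_1,...,k_r all have the same parity, and let X be the projective toric subset parameterized by G. If all k_i are odd, then reg(G) = (⌊k_1/2⌋ + ... + ⌊k_r/2⌋)(q−2); if all k_i are even, then reg(G) = (k_1/2 + ... + k_r/2 − 1)(q−2). -/
open MvPolynomial

/-- A finite multigraph without loops: each edge `e` has two distinct endpoints
`fst e` and `snd e`.  Multiple edges with the same endpoints are allowed. -/
structure Multigraph (V E : Type) : Type where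
  fst : E → V
  snd : E → V
  ne : ∀ e, fst e ≠ snd e

namespace Multigraph

variable {V E : Type}

/-- Vertex `v` is an endpoint of the edge `e`. -/
def Incident (G : Multigraph V E) (v : V) (e : E) : Prop :=
  G.fst e = v ∨ G.snd e = v

instance (G : Multigraph V E) [DecidableEq V] (v : V) : DecidablePred (G.Incident v) :=
  fun e => inferInstanceAs (Decidable (G.fst e = v ∨ G.snd e = v))

/-- The degree of a vertex: the number of edges incident to it. -/
noncomputable def degree (G : Multigraph V E) (v : V) : ℕ :=
  Nat.card {e : E // G.Incident v e}

/-- The graph has no isolated vertices. -/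
def NoIsolated (G : Multigraph V E) : Prop :=
  ∀ v : V, ∃ e : E, G.Incident v e

variable (K : Type) [Field K] [Fintype K]

/-- The point of the affine torus associated with an assignment `x` of nonzero
scalars to the vertices: its coordinate at an edge `e = {v,w}` is `x v * x w`. -/
def point (G : Multigraph V E) (x : V → Kˣ) : E → K :=
  fun e => (x (G.fst e) : K) * (x (G.snd e) : K)

/-- The projective toric subset `X` parameterized by `G`, realized as the set of
`Kˣ`-orbits (i.e. projective points) of the points `G.point K x`, `x : V → Kˣ`. -/
def toricSet (G : Multigraph V E) : Set (Set (E → K)) :=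
  Set.range fun x : V → Kˣ => MulAction.orbit Kˣ (G.point K x)

/-- The vanishing ideal `I(X)` of the projective toric subset parameterized by `G`:
the ideal of all polynomials each of whose homogeneous components vanishes at the
point `G.point K x` for every `x : V → Kˣ`. -/
def vanishingIdeal (G : Multigraph V E) : Ideal (MvPolynomial E K) where
  carrier := {f | ∀ (x : V → Kˣ) (d : ℕ), eval (G.point K x) (homogeneousComponent d f) = 0}
  zero_mem' := by intro x d; simp
  add_mem' := by
    intro a b ha hb x d
    rw [map_add, map_add, ha x d, hb x d, add_zero]
  smul_mem' := by
    intro c f hf x n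
    rw [smul_eq_mul, ← sum_homogeneousComponent f, Finset.mul_sum, map_sum, map_sum]
    refine Finset.sum_eq_zero fun d _ => ?_
    nth_rewrite 1 [← sum_homogeneousComponent c]
    rw [Finset.sum_mul, map_sum, map_sum]
    refine Finset.sum_eq_zero fun e _ => ?_
    have h1 : (homogeneousComponent e c * homogeneousComponent d f).IsHomogeneous (e + d) :=
      (homogeneousComponent_isHomogeneous e c).mul (homogeneousComponent_isHomogeneous d f)
    rw [homogeneousComponent_of_mem ((mem_homogeneousSubmodule _ _).mpr h1)]
    split_ifs
    · rw [map_mul, hf x d, mul_zero]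
    · simp

/-- The Hilbert function of `S/I(X)`: the dimension over `K` of the degree-`d`
homogeneous component of the quotient, realized as the image of the space of
degree-`d` homogeneous polynomials in the quotient. -/
noncomputable def hilbert (G : Multigraph V E) (d : ℕ) : ℕ :=
  Module.finrank K
    ((homogeneousSubmodule E K d).map (Ideal.Quotient.mkₐ K (G.vanishingIdeal K)).toLinearMap)

/-- The regularity `reg G`: the least `d` such that the Hilbert function of `S/I(X)`
at `d` equals the number of points of `X`. -/
noncomputable def reg (G : Multigraph V E) : ℕ :=
  sInf {d : ℕ | G.hilbert K d = (G.toricSet K).ncard}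

/-- The graph obtained from `G` by deleting a vertex `v` and all edges incident
to it. -/
def deleteVert (G : Multigraph V E) (v : V) :
    Multigraph {w : V // w ≠ v} {e : E // ¬ G.Incident v e} where
  fst e := ⟨G.fst e.1, fun h => e.2 (Or.inl h)⟩
  snd e := ⟨G.snd e.1, fun h => e.2 (Or.inr h)⟩
  ne e h := G.ne e.1 (congrArg Subtype.val h)

/-- The graph obtained from `G` by identifying the vertex `v₂` with the vertex `v₁`:
the edges are the same, and every endpoint equal to `v₂` is replaced by `v₁`.
This requires that `{v₁, v₂}` is a non-edge of `G`, so that no loops are created. -/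
def identifyVert [DecidableEq V] (G : Multigraph V E) (v₁ v₂ : V) (h12 : v₁ ≠ v₂)
    (h : ∀ e, ¬ (G.Incident v₁ e ∧ G.Incident v₂ e)) :
    Multigraph {w : V // w ≠ v₂} E where
  fst e := ⟨if G.fst e = v₂ then v₁ else G.fst e, by split_ifs with hh; exacts [h12, hh]⟩
  snd e := ⟨if G.snd e = v₂ then v₁ else G.snd e, by split_ifs with hh; exacts [h12, hh]⟩
  ne := by
    intro e heq
    rw [Subtype.ext_iff] at heq
    simp only at heq
    split_ifs at heq with h1 h2 h2
    · exact G.ne e (h1.trans h2.symm)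
    · exact h e ⟨Or.inr heq.symm, Or.inl h1⟩
    · exact h e ⟨Or.inl heq, Or.inr h2⟩
    · exact G.ne e heq

/-- The subgraph of `G` determined by a set `A` of edges of `G`, together with all
endpoints of those edges (so it has no isolated vertices). -/
def subgraph [DecidableEq V] (G : Multigraph V E) (A : Finset E) :
    Multigraph {v : V // ∃ e ∈ A, G.Incident v e} {e : E // e ∈ A} where
  fst e := ⟨G.fst e.1, e.1, e.2, Or.inl rfl⟩
  snd e := ⟨G.snd e.1, e.1, e.2, Or.inr rfl⟩
  ne e h := G.ne e.1 (congrArg Subtype.val h)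

end Multigraph

/-- The vertex of the parallel composition of paths of lengths `k i` lying on the
`i`-th path at distance `j` from the common initial vertex:  `j = 0` gives the common
initial vertex, `j = k i` the common terminal vertex, and `0 < j < k i` gives the
`j`-th interior vertex of the `i`-th path. -/
def pcVert {ι : Type} (k : ι → ℕ) (i : ι) (j : ℕ) :
    Bool ⊕ ((i : ι) × Fin (k i - 1)) :=
  if h0 : j = 0 then Sum.inl false
  else if h : j < k i then Sum.inr ⟨i, ⟨j - 1, by omega⟩⟩
  else Sum.inl true

/-- The parallel composition of the family of paths `P i` of lengths `k i` (`i : ι`):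
the `i`-th path has `k i` edges indexed by `Fin (k i)`, its `j`-th edge joining the
vertices of the `i`-th path at distances `j` and `j + 1` from the common initial
vertex.  All the initial vertices of the paths are identified to a single vertex and
all the terminal vertices are identified to a single vertex. -/
def parallelComp {ι : Type} (k : ι → ℕ) :
    Multigraph (Bool ⊕ ((i : ι) × Fin (k i - 1))) ((i : ι) × Fin (k i)) where
  fst e := pcVert k e.1 e.2.1
  snd e := pcVert k e.1 (e.2.1 + 1)
  ne := by
    rintro ⟨i, j⟩ h
    have hj := j.2
    simp only [pcVert] at h
    split_ifs at h <;> simp_all <;> omega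

/-- The monomial `f i`: the product of the edges of the `i`-th path of the parallel
composition in odd positions (positions `1, 3, 5, ...`, i.e. indices `0, 2, 4, ...`). -/
noncomputable def oddProd {ι : Type} (K : Type) [Field K] (k : ι → ℕ) (i : ι) :
    MvPolynomial ((i : ι) × Fin (k i)) K :=
  ∏ m : Fin ((k i + 1) / 2), X ⟨i, ⟨2 * m.1, by have := m.2; omega⟩⟩

/-- The monomial `g i`: the product of the edges of the `i`-th path of the parallel
composition in even positions (positions `2, 4, 6, ...`, i.e. indices `1, 3, 5, ...`). -/
noncomputable def evenProd {ι : Type} (K : Type) [Field K] (k : ι → ℕ) (i : ι) :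
    MvPolynomial ((i : ι) × Fin (k i)) K :=
  ∏ m : Fin (k i / 2), X ⟨i, ⟨2 * m.1 + 1, by have := m.2; omega⟩⟩


section PartOne

set_option linter.unusedSectionVars false

open Finset

variable {V E : Type} [Fintype V] [Fintype E] [DecidableEq V] [DecidableEq E]
variable (K : Type) [Field K] [Fintype K]

namespace Multigraph

/-- the character of the torus attached to an edge -/
noncomputable def chiEdge (G : Multigraph V E) (e : E) : (V → Kˣ) →* Kˣ :=
  Pi.evalMonoidHom (fun _ : V => Kˣ) (G.fst e) * Pi.evalMonoidHom (fun _ : V => Kˣ) (G.snd e)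

/-- the character attached to a monomial -/
noncomputable def chi (G : Multigraph V E) (a : E → ℕ) : (V → Kˣ) →* Kˣ :=
  ∏ e, (G.chiEdge K e) ^ (a e)

lemma chi_apply (G : Multigraph V E) (a : E → ℕ) (x : V → Kˣ) :
    G.chi K a x = ∏ e, (x (G.fst e) * x (G.snd e)) ^ (a e) := by
  simp [chi, chiEdge]

lemma chi_add (G : Multigraph V E) (a b : E → ℕ) :
    G.chi K (a + b) = G.chi K a * G.chi K b := by
  refine MonoidHom.ext fun x => ?_
  rw [MonoidHom.mul_apply, chi_apply, chi_apply, chi_apply, ← Finset.prod_mul_distrib]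
  exact Finset.prod_congr rfl fun e _ => pow_add _ _ _

/-- evaluation on the torus -/
noncomputable def evT (G : Multigraph V E) : MvPolynomial E K →ₗ[K] ((V → Kˣ) → K) :=
  LinearMap.pi fun x => (MvPolynomial.aeval (G.point K x)).toLinearMap

lemma evT_apply (G : Multigraph V E) (f : MvPolynomial E K) (x : V → Kˣ) :
    G.evT K f x = eval (G.point K x) f := by
  simp [evT, MvPolynomial.aeval_eq_eval]

lemma hilbert_eq_finrank (G : Multigraph V E) (d : ℕ) :
    G.hilbert K d = Module.finrank K ((homogeneousSubmodule E K d).map (G.evT K)) := by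
  unfold hilbert
  set f := (Ideal.Quotient.mkₐ K (G.vanishingIdeal K)).toLinearMap with hf
  have hker : LinearMap.ker (f.domRestrict (homogeneousSubmodule E K d)) =
      LinearMap.ker ((G.evT K).domRestrict (homogeneousSubmodule E K d)) := by
    ext ⟨p, hp⟩
    simp only [LinearMap.mem_ker, LinearMap.domRestrict_apply]
    have h1 : f p = 0 ↔ p ∈ G.vanishingIdeal K := by
      rw [hf]; exact Ideal.Quotient.eq_zero_iff_mem
    rw [h1]
    constructor
    · intro h
      funext x
      rw [evT_apply]
      have := h x d
      rwa [homogeneousComponent_of_mem hp, if_pos rfl] at this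
    · intro h x d'
      rw [homogeneousComponent_of_mem hp]
      split_ifs
      · rw [← evT_apply, h]; rfl
      · simp
  rw [← LinearMap.range_domRestrict, ← LinearMap.range_domRestrict]
  exact LinearEquiv.finrank_eq
    (((f.domRestrict _).quotKerEquivRange.symm.trans (Submodule.quotEquivOfEq _ _ hker)).trans
      ((G.evT K).domRestrict _).quotKerEquivRange)

/-- characters of degree d -/
def charSet (G : Multigraph V E) (d : ℕ) : Set ((V → Kˣ) →* Kˣ) :=
  {ψ | ∃ a : E → ℕ, ∑ e, a e = d ∧ G.chi K a = ψ}

/-- characters of degree congruent to d -/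
def charSetMod (G : Multigraph V E) (d : ℕ) : Set ((V → Kˣ) →* Kˣ) :=
  {ψ | ∃ a : E → ℕ, ((∑ e, a e : ℕ) : ZMod (Fintype.card K - 1)) = d ∧ G.chi K a = ψ}

lemma evT_monomial (G : Multigraph V E) (a : E →₀ ℕ) (x : V → Kˣ) :
    G.evT K (monomial a 1) x = (G.chi K a x : K) := by
  rw [evT_apply, chi_apply, eval_monomial, Finsupp.prod_fintype _ _ (by simp)]
  simp [point]

lemma hilbert_eq_ncard (G : Multigraph V E) (d : ℕ) :
    G.hilbert K d = (G.charSet K d).ncard := by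
  rw [hilbert_eq_finrank]
  let c : ((V → Kˣ) →* Kˣ) → ((V → Kˣ) → K) := fun ψ x => (ψ x : K)
  have hc : LinearIndependent K c := by
    have h := linearIndependent_monoidHom (V → Kˣ) K
    exact h.comp (fun ψ : (V → Kˣ) →* Kˣ => (Units.coeHom K).comp ψ) (by
      intro a b hab
      refine MonoidHom.ext fun x => Units.ext ?_
      exact DFunLike.congr_fun hab x)
  have hs : (homogeneousSubmodule E K d).map (G.evT K) =
      Submodule.span K (Set.range fun ψ : G.charSet K d => c ψ) := by
    apply le_antisymm
    · rintro _ ⟨p, hp, rfl⟩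
      rw [p.as_sum, map_sum]
      refine Submodule.sum_mem _ fun s hs => ?_
      have h1 : monomial s (coeff s p) = (coeff s p) • monomial s (1 : K) := by
        rw [smul_monomial]; simp
      rw [h1, map_smul]
      refine Submodule.smul_mem _ _ (Submodule.subset_span ?_)
      have hd : s.degree = d := by
        rw [Finsupp.degree_eq_weight_one]
        exact hp (mem_support_iff.mp hs)
      refine ⟨⟨G.chi K s, s, ?_, rfl⟩, ?_⟩
      · rw [← hd, Finsupp.degree_eq_sum]
      · funext x
        exact (evT_monomial K G s x).symm
    · rw [Submodule.span_le]
      rintro _ ⟨⟨ψ, a, ha, rfl⟩, rfl⟩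
      refine ⟨monomial (Finsupp.equivFunOnFinite.symm a) 1, ?_, ?_⟩
      · refine isHomogeneous_monomial _ ?_
        rw [Finsupp.degree_eq_sum]; simpa using ha
      · funext x
        rw [evT_monomial]; simp [c]
  have : Fintype (G.charSet K d) := Fintype.ofFinite _
  rw [hs]
  refine (finrank_span_eq_card
    (hc.comp (Subtype.val : G.charSet K d → _) Subtype.val_injective)).trans ?_
  rw [← Nat.card_eq_fintype_card]; rfl

lemma units_card : Nat.card Kˣ = Fintype.card K - 1 := by
  rw [Nat.card_units, Nat.card_eq_fintype_card]

lemma units_pow (u : Kˣ) : u ^ (Fintype.card K - 1) = 1 := by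
  rw [← units_card, pow_card_eq_one']

lemma card_sub_one_ne : Fintype.card K - 1 ≠ 0 := by
  have := Fintype.one_lt_card (α := K)
  omega

lemma chi_smul_card (G : Multigraph V E) (a : E → ℕ) :
    G.chi K ((Fintype.card K - 1) • a) = 1 := by
  refine MonoidHom.ext fun x => ?_
  rw [chi_apply]
  simp only [Pi.smul_apply, smul_eq_mul, pow_mul]
  simp [units_pow]

/-- the group of characters of degree zero -/
noncomputable def gam (G : Multigraph V E) : Subgroup ((V → Kˣ) →* Kˣ) where
  carrier := G.charSetMod K 0
  one_mem' := ⟨0, by simp, by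
    refine MonoidHom.ext fun x => ?_
    rw [chi_apply]; simp⟩
  mul_mem' := by
    rintro _ _ ⟨a, ha, rfl⟩ ⟨b, hb, rfl⟩
    refine ⟨a + b, ?_, chi_add K G a b⟩
    simp only [Pi.add_apply, Finset.sum_add_distrib, Nat.cast_add, ha, hb]
    simp
  inv_mem' := by
    rintro _ ⟨a, ha, rfl⟩
    refine ⟨(Fintype.card K - 1 - 1) • a, ?_, ?_⟩
    · simp only [Pi.smul_apply, smul_eq_mul, ← Finset.mul_sum, Nat.cast_mul, ha]
      simp
    · rw [eq_inv_iff_mul_eq_one, ← chi_add]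
      have h := card_sub_one_ne K
      have h2 : (Fintype.card K - 1 - 1) • a + a = (Fintype.card K - 1) • a := by
        rw [← succ_nsmul]; congr 1; omega
      rw [h2, chi_smul_card]

lemma charSetMod_ncard (G : Multigraph V E) (e₀ : E) (d : ℕ) :
    (G.charSetMod K d).ncard = (G.charSetMod K 0).ncard := by
  have key : ∀ a : E → ℕ, G.chi K (a + Pi.single e₀ d) = G.chi K a * G.chi K (Pi.single e₀ d) :=
    fun a => chi_add K G a _
  have : G.charSetMod K d = (fun ψ => ψ * G.chi K (Pi.single e₀ d)) '' G.charSetMod K 0 := by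
    ext ψ
    constructor
    · rintro ⟨a, ha, rfl⟩
      refine ⟨G.chi K (a + (Fintype.card K - 1 - 1) • Pi.single e₀ d), ⟨_, ?_, rfl⟩, ?_⟩
      · have h := card_sub_one_ne K
        have h1 : ((Fintype.card K - 1 - 1 : ℕ) : ZMod (Fintype.card K - 1)) = -1 := by
          rw [Nat.cast_sub (by omega)]; simp
        simp only [Pi.add_apply, Pi.smul_apply, smul_eq_mul, Finset.sum_add_distrib,
          ← Finset.mul_sum, Nat.cast_add, ha, Nat.cast_mul, h1]
        simp
      · simp only
        rw [← chi_add, add_assoc]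
        have h := card_sub_one_ne K
        have h2 : (Fintype.card K - 1 - 1) • (Pi.single e₀ d : E → ℕ) + Pi.single e₀ d
            = (Fintype.card K - 1) • Pi.single e₀ d := by
          rw [← succ_nsmul]; congr 1; omega
        rw [h2, chi_add, chi_smul_card]
        exact mul_one (G.chi K a)
    · rintro ⟨_, ⟨a, ha, rfl⟩, rfl⟩
      refine ⟨a + Pi.single e₀ d, ?_, key a⟩
      simp only [Pi.add_apply, Finset.sum_add_distrib, Nat.cast_add, ha]
      simp
  rw [this]
  exact Set.ncard_image_of_injective _ (mul_left_injective _)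

lemma toricSet_ncard (G : Multigraph V E) (e₀ : E) :
    (G.toricSet K).ncard = (G.charSetMod K 0).ncard := by
  have : NeZero (Fintype.card K - 1) := ⟨card_sub_one_ne K⟩
  have h1 : HasEnoughRootsOfUnity K (Fintype.card K - 1) := by
    refine HasEnoughRootsOfUnity.of_card_le ?_
    have : rootsOfUnity (Fintype.card K - 1) K = ⊤ := by
      ext u; simp [mem_rootsOfUnity, units_pow]
    rw [this, ← units_card]
    simp
  have h2 : HasEnoughRootsOfUnity K (Monoid.exponent (V → Kˣ)) := by
    refine h1.of_dvd K (Monoid.exponent_dvd_of_forall_pow_eq_one fun x => ?_)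
    funext v
    exact units_pow K (x v)
  set H : Subgroup (V → Kˣ) :=
    (CommGroup.subgroupOrderIsoSubgroupMonoidHom (V → Kˣ) K).symm (OrderDual.toDual (G.gam K))
    with hH
  have hmem : ∀ x, x ∈ H ↔ ∀ φ ∈ G.gam K, φ x = 1 := fun x =>
    CommGroup.mem_subgroupOrderIsoSubgroupMonoidHom_symm_iff K (G.gam K) x
  have hcard : Nat.card ((V → Kˣ) ⧸ H) = Nat.card (G.gam K) := by
    rw [← CommGroup.card_subgroupOrderIsoSubgroupMonoidHom K H, hH]
    simp
  have hset : (G.charSetMod K 0).ncard = Nat.card (G.gam K) := rfl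
  rw [hset, ← hcard]
  have hX : (G.toricSet K).ncard = Nat.card (Set.range fun x : V → Kˣ =>
    MulAction.orbit Kˣ (G.point K x)) := rfl
  rw [hX, ← Nat.card_congr (Setoid.quotientKerEquivRange _)]
  refine Nat.card_congr (Quotient.congrRight fun x y => ?_)
  rw [QuotientGroup.leftRel_apply, hmem]
  change MulAction.orbit Kˣ (G.point K x) = MulAction.orbit Kˣ (G.point K y) ↔ _
  rw [eq_comm, MulAction.orbit_eq_iff]
  have hp : ∀ (x : V → Kˣ) (e : E), G.point K x e = (G.chiEdge K e x : K) := by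
    intro x e; simp [point, chiEdge]
  constructor
  · rintro ⟨u, hu⟩ φ ⟨a, ha, rfl⟩
    have hu' : ∀ e, G.chiEdge K e (x⁻¹ * y) = u := by
      intro e
      have := congrFun hu e
      rw [map_mul, map_inv]
      simp only [Pi.smul_apply, hp, Units.smul_def, smul_eq_mul] at this
      rw [inv_mul_eq_iff_eq_mul, mul_comm]
      exact Units.ext (by simpa using this.symm)
    have h3 : G.chi K a (x⁻¹ * y) = u ^ (∑ e, a e) := by
      rw [← Finset.prod_pow_eq_pow_sum]
      rw [chi_apply]
      refine Finset.prod_congr rfl fun e _ => ?_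
      rw [← hu' e]; simp [chiEdge]
    rw [h3]
    rw [Nat.cast_zero, ZMod.natCast_eq_zero_iff] at ha
    obtain ⟨m, hm⟩ := ha
    rw [hm, pow_mul, units_pow, one_pow]
  · intro h
    refine ⟨G.chiEdge K e₀ (x⁻¹ * y), ?_⟩
    funext e
    simp only [Pi.smul_apply, hp, Units.smul_def, smul_eq_mul]
    have h4 := h (G.chi K (Pi.single e 1 + (Fintype.card K - 1 - 1) • Pi.single e₀ 1)) ⟨_, by
      have h := card_sub_one_ne K
      have h1 : ((Fintype.card K - 1 - 1 : ℕ) : ZMod (Fintype.card K - 1)) = -1 := by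
        rw [Nat.cast_sub (by omega)]; simp
      simp only [Pi.add_apply, Pi.smul_apply, smul_eq_mul, Finset.sum_add_distrib,
        ← Finset.mul_sum, Nat.cast_add, Nat.cast_mul, h1]
      simp, rfl⟩
    have h5 : ∀ e z, G.chi K (Pi.single e 1) z = G.chiEdge K e z := by
      intro e z
      rw [chi_apply, Finset.prod_eq_single e]
      · simp [chiEdge]
      · intro b _ hb; simp [hb]
      · simp
    have h6 : G.chi K ((Fintype.card K - 1 - 1) • Pi.single e₀ 1) * G.chi K (Pi.single e₀ 1) = 1 := by
      rw [← chi_add]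
      have h := card_sub_one_ne K
      have h2 : (Fintype.card K - 1 - 1) • (Pi.single e₀ 1 : E → ℕ) + Pi.single e₀ 1
          = (Fintype.card K - 1) • Pi.single e₀ 1 := by
        rw [← succ_nsmul]; congr 1; omega
      rw [h2, chi_smul_card]
    have h7 := eq_inv_of_mul_eq_one_left (DFunLike.congr_fun h6 (x⁻¹ * y))
    rw [chi_add, MonoidHom.mul_apply, h7, h5, h5, mul_inv_eq_one] at h4
    rw [← h4, map_mul, map_inv, ← Units.val_mul, mul_comm]
    congr 1
    group

/-- equivalence of exponent vectors -/
def Eqv (n : ℕ) (G : Multigraph V E) (a b : E → ZMod n) : Prop :=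
  ∀ y : V → ZMod n, ∑ e, a e * (y (G.fst e) + y (G.snd e)) =
    ∑ e, b e * (y (G.fst e) + y (G.snd e))

lemma chi_eq_iff (G : Multigraph V E) (a b : E → ℕ) :
    G.chi K a = G.chi K b ↔
      Eqv (Fintype.card K - 1) G (fun e => (a e : ZMod _)) (fun e => (b e : ZMod _)) := by
  have hcyc : IsCyclic Kˣ := inferInstance
  have φ : Multiplicative (ZMod (Fintype.card K - 1)) ≃* Kˣ := by
    have := zmodCyclicMulEquiv hcyc
    rwa [units_card] at this
  have key : ∀ (a : E → ℕ) (y : V → ZMod (Fintype.card K - 1)),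
      G.chi K a (fun v => φ (Multiplicative.ofAdd (y v))) =
        φ (Multiplicative.ofAdd (∑ e, (a e : ZMod _) * (y (G.fst e) + y (G.snd e)))) := by
    intro a y
    rw [chi_apply, ofAdd_sum, map_prod]
    refine Finset.prod_congr rfl fun e _ => ?_
    rw [← map_mul, ← map_pow, ← ofAdd_add, ← ofAdd_nsmul, nsmul_eq_mul]
  constructor
  · intro h y
    have := key a y
    rw [h, key b y] at this
    exact (Multiplicative.ofAdd.injective (φ.injective this)).symm
  · intro h
    refine MonoidHom.ext fun x => ?_
    have hx : x = fun v => φ (Multiplicative.ofAdd (Multiplicative.toAdd (φ.symm (x v)))) := by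
      funext v; simp
    rw [hx, key, key]
    exact congrArg (fun z => φ (Multiplicative.ofAdd z))
      (h fun v => Multiplicative.toAdd (φ.symm (x v)))

lemma hilbert_eq_iff (G : Multigraph V E) (e₀ : E) (d : ℕ) :
    G.hilbert K d = (G.toricSet K).ncard ↔
      ∀ a : E → ℕ, ((∑ e, a e : ℕ) : ZMod (Fintype.card K - 1)) = d →
        ∃ b : E → ℕ, ∑ e, b e = d ∧
          Eqv (Fintype.card K - 1) G (fun e => (b e : ZMod _)) (fun e => (a e : ZMod _)) := by
  rw [hilbert_eq_ncard, toricSet_ncard K G e₀, ← charSetMod_ncard K G e₀ d]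
  have hsub : G.charSet K d ⊆ G.charSetMod K d := by
    rintro _ ⟨a, ha, rfl⟩
    exact ⟨a, by rw [ha], rfl⟩
  constructor
  · intro h a ha
    have heq := Set.eq_of_subset_of_ncard_le hsub h.ge (Set.toFinite _)
    have : G.chi K a ∈ G.charSet K d := heq ▸ ⟨a, ha, rfl⟩
    obtain ⟨b, hb, hab⟩ := this
    exact ⟨b, hb, (chi_eq_iff K G b a).1 hab⟩
  · intro h
    congr 1
    refine hsub.antisymm ?_
    rintro _ ⟨a, ha, rfl⟩
    obtain ⟨b, hb, hab⟩ := h a ha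
    exact ⟨b, hb, (chi_eq_iff K G b a).2 hab⟩

end Multigraph

end PartOne

section PartTwo

open Finset

lemma two_sum_val (n : ℕ) [NeZero n] : 2 * ∑ z : ZMod n, (z.val : ℤ) = n * (n - 1) := by
  obtain ⟨m, rfl⟩ : ∃ m, n = m + 1 := ⟨n - 1, by have := NeZero.ne n; omega⟩
  have h1 : ∑ z : ZMod (m + 1), (z.val : ℤ) = ∑ i ∈ range (m + 1), (i : ℤ) :=
    Fin.sum_univ_eq_sum_range (fun i => (i : ℤ)) (m + 1)
  rw [h1]
  have h2 := Finset.sum_range_id_mul_two (m + 1)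
  have h3 : (((∑ i ∈ range (m + 1), i) * 2 : ℕ) : ℤ) = ((m + 1) * (m + 1 - 1) : ℕ) := by
    exact_mod_cast h2
  push_cast at h3 ⊢
  simp only [add_sub_cancel_right] at h3 ⊢
  linarith

lemma conv_step {n : ℕ} [NeZero n] (F G : ZMod n → ℤ) (μ ν : ℤ)
    (hF : 2 * ∑ c, F c ≤ n * μ) (hG : 2 * ∑ c, G c ≤ n * ν) (t : ZMod n) :
    ∃ c, 2 * (F c + G (t - c)) ≤ μ + ν := by
  by_contra! h
  have h1 : ∑ _c : ZMod n, (μ + ν) < ∑ c : ZMod n, 2 * (F c + G (t - c)) :=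
    Finset.sum_lt_sum_of_nonempty ⟨0, mem_univ _⟩ fun c _ => h c
  have h2 : ∑ c : ZMod n, G (t - c) = ∑ c, G c :=
    Equiv.sum_comp (Equiv.subLeft t) G
  rw [← Finset.mul_sum] at h1
  simp only [Finset.sum_add_distrib] at h1
  rw [h2] at h1
  simp only [Finset.sum_const, Finset.card_univ, ZMod.card, nsmul_eq_mul] at h1
  linarith

lemma conv_B {n : ℕ} [NeZero n] (r : ℕ) (F : Fin (r + 1) → ZMod n → ℤ) (μ ν : ℤ)
    (γ : ZMod n → Fin r → ZMod n) (hγ : ∀ t, ∑ i, γ t i = t)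
    (h0 : 2 * ∑ c, F 0 c ≤ n * μ)
    (h1 : 2 * ∑ t, ∑ i, F (Fin.succ i) (γ t i) ≤ n * ν) (t : ZMod n) :
    ∃ c : Fin (r + 1) → ZMod n, ∑ i, c i = t ∧ 2 * ∑ i, F i (c i) ≤ μ + ν := by
  obtain ⟨c, hc⟩ := conv_step (F 0) (fun t => ∑ i, F (Fin.succ i) (γ t i)) μ ν h0 h1 t
  refine ⟨Fin.cons c (γ (t - c)), ?_, ?_⟩
  · rw [Fin.sum_univ_succ]; simp [hγ]
  · rw [Fin.sum_univ_succ]; simpa using hc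

lemma even_A {n : ℕ} [NeZero n] (r : ℕ) : ∀ (F : Fin (r + 1) → ZMod n → ℤ)
    (μ : Fin (r + 1) → ℤ) (_ : ∀ i, 2 * ∑ c, F i c ≤ n * μ i),
    ∃ γ : ZMod n → Fin (r + 1) → ZMod n, (∀ t, ∑ i, γ t i = t) ∧
      2 * ∑ t, ∑ i, F i (γ t i) ≤ n * ∑ i, μ i := by
  induction r with
  | zero =>
    intro F μ h
    refine ⟨fun t _ => t, by simp, ?_⟩
    simpa using h 0
  | succ r ih =>
    intro F μ h
    obtain ⟨γ, hγ, h1⟩ := ih (fun i => F i.succ) (fun i => μ i.succ) (fun i => h i.succ)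
    choose c hc hc2 using conv_B (r + 1) F _ _ γ hγ (h 0) h1
    refine ⟨c, hc, ?_⟩
    rw [Finset.mul_sum]
    calc _ ≤ ∑ _t : ZMod n, (μ 0 + ∑ i, μ (Fin.succ i)) := Finset.sum_le_sum fun t _ => hc2 t
      _ = _ := by
        rw [Fin.sum_univ_succ μ]
        simp [ZMod.card]

lemma even_B {n : ℕ} [NeZero n] (r : ℕ) (hr : 2 ≤ r) (F : Fin r → ZMod n → ℤ)
    (μ : Fin r → ℤ) (h : ∀ i, 2 * ∑ c, F i c ≤ n * μ i) :
    ∃ c : Fin r → ZMod n, ∑ i, c i = 0 ∧ 2 * ∑ i, F i (c i) ≤ ∑ i, μ i := by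
  obtain ⟨r, rfl⟩ : ∃ s, r = s + 2 := ⟨r - 2, by omega⟩
  obtain ⟨γ, hγ, h1⟩ := even_A r (fun i => F i.succ) (fun i => μ i.succ) (fun i => h i.succ)
  obtain ⟨c, hc, hc2⟩ := conv_B (r + 1) F _ _ γ hγ (h 0) h1 0
  refine ⟨c, hc, ?_⟩
  rwa [Fin.sum_univ_succ μ]

lemma le_val_of_cast {n : ℕ} [NeZero n] (x : ℤ) (z : ZMod n) (h : (x : ZMod n) = z)
    (hx : x ≤ n - 1) : x ≤ z.val := by
  by_contra! hlt
  have h1 : ((x - z.val : ℤ) : ZMod n) = 0 := by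
    push_cast; rw [h]; simp
  rw [ZMod.intCast_zmod_eq_zero_iff_dvd] at h1
  have := Int.le_of_dvd (by omega) h1
  omega

lemma odd_A {n : ℕ} [NeZero n] (r : ℕ) : ∀ (F : Fin (r + 1) → ZMod n → ℤ)
    (s : Fin (r + 1) → ZMod n) (_ : ∀ i, 2 * ∑ c, F i c ≤ n * (n - 1))
    (_ : ∀ i c, ((F i c : ℤ) : ZMod n) = c + s i),
    ∃ γ : ZMod n → Fin (r + 1) → ZMod n, (∀ t, ∑ i, γ t i = t) ∧
      2 * ∑ t, ∑ i, F i (γ t i) ≤ n * (n - 1) := by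
  induction r with
  | zero =>
    intro F s h _
    refine ⟨fun t _ => t, by simp, ?_⟩
    simpa using h 0
  | succ r ih =>
    intro F s h hs
    obtain ⟨γ, hγ, h1⟩ := ih (fun i => F i.succ) (fun i => s i.succ) (fun i => h i.succ)
      (fun i => hs i.succ)
    choose c hc hc2 using conv_B (r + 1) F _ _ γ hγ (h 0) h1
    refine ⟨c, hc, ?_⟩
    have h3 : ∀ t, ∑ i, F i (c t i) ≤ ((t + ∑ i, s i : ZMod n).val : ℤ) := by
      intro t
      refine le_val_of_cast _ _ ?_ (by have := hc2 t; omega)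
      push_cast
      simp only [hs, Finset.sum_add_distrib, hc]
    have h4 : ∑ t : ZMod n, ((t + ∑ i, s i : ZMod n).val : ℤ) = ∑ t : ZMod n, (t.val : ℤ) :=
      Equiv.sum_comp (Equiv.addRight (∑ i, s i)) (fun t : ZMod n => (t.val : ℤ))
    rw [← two_sum_val, ← h4]
    exact mul_le_mul_of_nonneg_left (Finset.sum_le_sum fun t _ => h3 t) (by norm_num)

lemma odd_B {n : ℕ} [NeZero n] (r : ℕ) (hr : 2 ≤ r) (F : Fin r → ZMod n → ℤ)
    (s : Fin r → ZMod n) (h : ∀ i, 2 * ∑ c, F i c ≤ n * (n - 1))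
    (hs : ∀ i c, ((F i c : ℤ) : ZMod n) = c + s i) :
    ∃ c : Fin r → ZMod n, ∑ i, c i = 0 ∧ ∑ i, F i (c i) ≤ n - 1 := by
  obtain ⟨r, rfl⟩ : ∃ s, r = s + 2 := ⟨r - 2, by omega⟩
  obtain ⟨γ, hγ, h1⟩ := odd_A r (fun i => F i.succ) (fun i => s i.succ) (fun i => h i.succ)
    (fun i => hs i.succ)
  obtain ⟨c, hc, hc2⟩ := conv_B (r + 1) F _ _ γ hγ (h 0) h1 0
  have h5 : 2 * (∑ i : Fin (r + 2), F i (c i)) ≤ ((n : ℤ) - 1) + (n - 1) := hc2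
  exact ⟨c, hc, by omega⟩

/-- the weight of a path labelling after twisting by c -/
def pathW {n : ℕ} (k : ℕ) (a : Fin k → ZMod n) (c : ZMod n) : ℤ :=
  ∑ j : Fin k, ((a j + (-1) ^ (j : ℕ) * c).val : ℤ)

lemma pathW_sum {n : ℕ} [NeZero n] (k : ℕ) (a : Fin k → ZMod n) :
    2 * ∑ c, pathW k a c = k * (n * (n - 1)) := by
  unfold pathW
  rw [Finset.sum_comm, Finset.mul_sum]
  have : ∀ j : Fin k, 2 * ∑ c : ZMod n, ((a j + (-1) ^ (j : ℕ) * c).val : ℤ) = n * (n - 1) := by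
    intro j
    rw [← two_sum_val]
    congr 1
    rcases neg_one_pow_eq_or (ZMod n) (j : ℕ) with h | h
    · rw [h]
      simp only [one_mul]
      exact Equiv.sum_comp (Equiv.addLeft (a j)) (fun t : ZMod n => (t.val : ℤ))
    · rw [h]
      simp only [neg_mul, one_mul, ← sub_eq_add_neg]
      exact Equiv.sum_comp (Equiv.subLeft (a j)) (fun t : ZMod n => (t.val : ℤ))
  rw [Finset.sum_congr rfl fun j _ => this j]
  simp

lemma pathW_cast {n : ℕ} [NeZero n] (k : ℕ) (a : Fin k → ZMod n) (c : ZMod n) :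
    ((pathW k a c : ℤ) : ZMod n) = (∑ j, a j) + (if Even k then 0 else 1) * c := by
  unfold pathW
  push_cast
  simp only [ZMod.natCast_val, ZMod.cast_id', id_eq, Finset.sum_add_distrib, ← Finset.sum_mul]
  rw [Fin.sum_univ_eq_sum_range (fun j => (-1 : ZMod n) ^ j), neg_one_geom_sum]

lemma telescope {R : Type} [CommRing R] (g : ℕ → R) (k : ℕ) :
    ∑ j ∈ range k, (-1) ^ j * (g j + g (j + 1)) = g 0 - (-1) ^ k * g k := by
  induction k with
  | zero => simp
  | succ k ih => rw [Finset.sum_range_succ, ih]; ring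

lemma pcVert_zero {ι : Type} (k : ι → ℕ) (i : ι) : pcVert k i 0 = Sum.inl false := by
  simp [pcVert]

lemma pcVert_last {ι : Type} (k : ι → ℕ) (i : ι) (h : 0 < k i) :
    pcVert k i (k i) = Sum.inl true := by
  simp [pcVert]; omega

lemma eqv_twist {n r : ℕ} (k : Fin r → ℕ) (hk : ∀ i, 0 < k i) (ε : ZMod n)
    (hε : ∀ i, (-1) ^ (k i) = ε) (a : ((i : Fin r) × Fin (k i)) → ZMod n)
    (c : Fin r → ZMod n) (hc : ∑ i, c i = 0) :
    Multigraph.Eqv n (parallelComp k) (fun e => a e + (-1) ^ (e.2 : ℕ) * c e.1) a := by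
  intro y
  simp only [add_mul, Finset.sum_add_distrib]
  rw [add_eq_left, Fintype.sum_sigma]
  have : ∀ i, ∑ j : Fin (k i), (-1) ^ (j : ℕ) * c i *
      (y ((parallelComp k).fst ⟨i, j⟩) + y ((parallelComp k).snd ⟨i, j⟩)) =
      c i * (y (Sum.inl false) - ε * y (Sum.inl true)) := by
    intro i
    have h1 := telescope (fun j => y (pcVert k i j)) (k i)
    rw [pcVert_zero, pcVert_last k i (hk i), hε] at h1
    rw [← h1, ← Fin.sum_univ_eq_sum_range
      (fun j => (-1) ^ j * (y (pcVert k i j) + y (pcVert k i (j + 1)))), Finset.mul_sum]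
    refine Finset.sum_congr rfl fun j _ => ?_
    simp only [parallelComp]
    ring
  rw [Finset.sum_congr rfl fun i _ => this i, ← Finset.sum_mul, hc, zero_mul]

/-- general criterion -/
lemma reg_eq_of (K : Type) [Field K] [Fintype K] {V E : Type} [Fintype V] [Fintype E]
    (G : Multigraph V E) (e₀ : E) (D : ℕ)
    (hU : ∀ a : E → ZMod (Fintype.card K - 1), ∃ b : E → ℕ,
      Multigraph.Eqv (Fintype.card K - 1) G (fun e => (b e : ZMod _)) a ∧
      ((∑ e, b e : ℕ) : ZMod (Fintype.card K - 1)) = ∑ e, a e ∧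
      ∑ e, b e ≤ D + (Fintype.card K - 2))
    (hL : ∃ A : E → ℕ, ∑ e, A e = D + (Fintype.card K - 2) ∧
      ∀ b : E → ℕ, Multigraph.Eqv (Fintype.card K - 1) G (fun e => (b e : ZMod _))
        (fun e => (A e : ZMod _)) → D + (Fintype.card K - 2) ≤ ∑ e, b e) :
    G.reg K = D := by
  classical
  obtain ⟨n, hn⟩ : ∃ n, n = Fintype.card K - 1 := ⟨_, rfl⟩
  have hn0 : n ≠ 0 := hn ▸ Multigraph.card_sub_one_ne K
  have hN : Fintype.card K - 2 = n - 1 := by omega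
  have : NeZero n := ⟨hn0⟩
  have key := Multigraph.hilbert_eq_iff K G e₀
  rw [← hn] at hU hL key
  rw [hN] at hU hL
  have hn1 : ((n - 1 : ℕ) : ZMod n) = -1 := by
    rw [Nat.cast_sub (by omega)]; simp
  refine IsLeast.csInf_eq ⟨?_, ?_⟩
  · rw [Set.mem_ofPred_eq, key]
    intro a ha
    obtain ⟨b, hb, hs, hle⟩ := hU (fun e => (a e : ZMod n))
    have hsD : ((∑ e, b e : ℕ) : ZMod n) = D := by
      rw [hs, ← ha]; push_cast; rfl
    have hle' : ((∑ e, b e : ℕ) : ℤ) ≤ D := by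
      by_contra! hlt
      have h1 : (((∑ e, b e : ℕ) - D : ℤ) : ZMod n) = 0 := by
        rw [Int.cast_sub, Int.cast_natCast, Int.cast_natCast, hsD, sub_self]
      rw [ZMod.intCast_zmod_eq_zero_iff_dvd] at h1
      have := Int.le_of_dvd (by omega) h1
      omega
    have hle2 : ∑ e, b e ≤ D := by exact_mod_cast hle'
    refine ⟨b + Pi.single e₀ (D - ∑ e, b e), ?_, ?_⟩
    · simp only [Pi.add_apply, Finset.sum_add_distrib]
      rw [Finset.sum_pi_single']
      simp; omega
    · have h2 : ((D - ∑ e, b e : ℕ) : ZMod n) = 0 := by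
        rw [Nat.cast_sub hle2, hsD, sub_self]
      have h3 : (fun e => (((b + Pi.single e₀ (D - ∑ e, b e) : E → ℕ) e : ℕ) : ZMod n)) =
          fun e => (b e : ZMod n) := by
        funext e
        by_cases he : e = e₀
        · subst he
          simp only [Pi.add_apply, Pi.single_eq_same, Nat.cast_add, h2, add_zero]
        · simp [he]
      rw [h3]
      exact hb
  · intro d hd
    rw [Set.mem_ofPred_eq, key] at hd
    by_contra! hlt
    obtain ⟨A, hA, hmin⟩ := hL
    obtain ⟨j, hj⟩ : ∃ j, D = d + 1 + j := ⟨D - d - 1, by omega⟩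
    obtain ⟨b, hb, hb2⟩ := hd (A + Pi.single e₀ ((n - 1) * j)) (by
      simp only [Pi.add_apply, Finset.sum_add_distrib]
      rw [Finset.sum_pi_single', hA]
      have : D + (n - 1) = d + j + n := by omega
      rw [this]
      simp only [Finset.mem_univ, if_true]
      push_cast
      rw [hn1]
      simp)
    have := hmin (b + Pi.single e₀ j) (by
      intro y
      have h1 := hb2 y
      have h2 : ∀ (p : E → ℕ) (m : ℕ), ∑ e, (((p + Pi.single e₀ m : E → ℕ) e : ℕ) : ZMod n) *
          (y (G.fst e) + y (G.snd e)) = ∑ e, (p e : ZMod n) * (y (G.fst e) + y (G.snd e)) +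
            m * (y (G.fst e₀) + y (G.snd e₀)) := by
        intro p m
        simp only [Pi.add_apply, Nat.cast_add, add_mul, Finset.sum_add_distrib]
        congr 1
        rw [Finset.sum_eq_single e₀]
        · simp
        · intro e _ he; simp [he]
        · simp
      simp only [h2] at h1 ⊢
      rw [h1, Nat.cast_mul, hn1]
      ring)
    simp only [Pi.add_apply, Finset.sum_add_distrib] at this
    rw [Finset.sum_pi_single', hb] at this
    simp at this
    omega

end PartTwo

section PartThree

open Finset

/-- extension by zero of an edge labelling to all natural positions -/
def extL {r : ℕ} (k : Fin r → ℕ) (a : ((i : Fin r) × Fin (k i)) → ℕ)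
    (i : Fin r) (j : ℕ) : ℕ :=
  if h : j < k i then a ⟨i, ⟨j, h⟩⟩ else 0

lemma sum_extL {r : ℕ} (k : Fin r → ℕ) (a : ((i : Fin r) × Fin (k i)) → ℕ) :
    ∑ e, a e = ∑ i, ∑ j ∈ range (k i), extL k a i j := by
  rw [Fintype.sum_sigma]
  refine Finset.sum_congr rfl fun i _ => ?_
  rw [← Fin.sum_univ_eq_sum_range (fun j => extL k a i j)]
  refine Finset.sum_congr rfl fun j _ => ?_
  simp [extL]

lemma eqv_test {n r : ℕ} (k : Fin r → ℕ) (a b : ((i : Fin r) × Fin (k i)) → ℕ)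
    (h : Multigraph.Eqv n (parallelComp k) (fun e => (a e : ZMod n)) (fun e => (b e : ZMod n)))
    (g : Fin r → ℕ → ZMod n) (g1 : ZMod n) (h0 : ∀ i, g i 0 = 0) (h1 : ∀ i, g i (k i) = g1) :
    ∑ i, ∑ j ∈ range (k i), (extL k a i j : ZMod n) * (g i j + g i (j + 1)) =
    ∑ i, ∑ j ∈ range (k i), (extL k b i j : ZMod n) * (g i j + g i (j + 1)) := by
  let y : (Bool ⊕ ((i : Fin r) × Fin (k i - 1))) → ZMod n := fun v =>
    match v with
    | Sum.inl false => 0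
    | Sum.inl true => g1
    | Sum.inr ⟨i, l⟩ => g i (l + 1)
  have hy : ∀ i j, j ≤ k i → y (pcVert k i j) = g i j := by
    intro i j hj
    unfold pcVert
    split_ifs with hj0 hjk
    · subst hj0; exact (h0 i).symm
    · change g i (j - 1 + 1) = _
      congr 1; omega
    · have : j = k i := by omega
      subst this; exact (h1 i).symm
  have key : ∀ a : ((i : Fin r) × Fin (k i)) → ℕ,
      ∑ e, (a e : ZMod n) * (y ((parallelComp k).fst e) + y ((parallelComp k).snd e)) =
      ∑ i, ∑ j ∈ range (k i), (extL k a i j : ZMod n) * (g i j + g i (j + 1)) := by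
    intro a
    rw [Fintype.sum_sigma]
    refine Finset.sum_congr rfl fun i _ => ?_
    rw [← Fin.sum_univ_eq_sum_range (fun j => (extL k a i j : ZMod n) * (g i j + g i (j + 1)))]
    refine Finset.sum_congr rfl fun j _ => ?_
    have e1 : y ((parallelComp k).fst ⟨i, j⟩) = g i j := hy i j (by omega)
    have e2 : y ((parallelComp k).snd ⟨i, j⟩) = g i (j + 1) := hy i (j + 1) (by omega)
    rw [e1, e2]
    simp [extL]
  have := h y
  rw [key, key] at this
  exact this

lemma test_mid {n r : ℕ} (k : Fin r → ℕ) (a b : ((i : Fin r) × Fin (k i)) → ℕ)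
    (h : Multigraph.Eqv n (parallelComp k) (fun e => (a e : ZMod n)) (fun e => (b e : ZMod n)))
    (i : Fin r) (m : ℕ) (hm : m + 1 < k i) :
    ((extL k a i m + extL k a i (m + 1) : ℕ) : ZMod n) =
      ((extL k b i m + extL k b i (m + 1) : ℕ) : ZMod n) := by
  have key := eqv_test k a b h (fun i' j => if i' = i ∧ j = m + 1 then 1 else 0) 0 (by simp)
    (by
      intro i'
      rw [if_neg]
      rintro ⟨rfl, h⟩
      omega)
  have : ∀ a : ((i : Fin r) × Fin (k i)) → ℕ,
      ∑ i', ∑ j ∈ range (k i'), (extL k a i' j : ZMod n) *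
        ((if i' = i ∧ j = m + 1 then 1 else 0) + (if i' = i ∧ j + 1 = m + 1 then 1 else 0)) =
      ((extL k a i m + extL k a i (m + 1) : ℕ) : ZMod n) := by
    intro a
    rw [Finset.sum_eq_single i]
    · simp only [true_and, mul_add, Finset.sum_add_distrib, mul_ite, mul_one, mul_zero,
        add_left_inj, Finset.sum_ite_eq', Finset.mem_range, hm, if_true]
      rw [if_pos (by omega)]
      push_cast
      ring
    · intro i' _ hi'
      simp [hi']
    · simp
  rwa [this, this] at key

lemma test_last {n r : ℕ} (k : Fin r → ℕ) (hk : ∀ i, 0 < k i)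
    (a b : ((i : Fin r) × Fin (k i)) → ℕ)
    (h : Multigraph.Eqv n (parallelComp k) (fun e => (a e : ZMod n)) (fun e => (b e : ZMod n))) :
    ((∑ i, extL k a i (k i - 1) : ℕ) : ZMod n) = ((∑ i, extL k b i (k i - 1) : ℕ) : ZMod n) := by
  have key := eqv_test k a b h (fun i' j => if j = k i' then 1 else 0) 1
    (by intro i; have := hk i; rw [if_neg (by omega)]) (by simp)
  have : ∀ a : ((i : Fin r) × Fin (k i)) → ℕ,
      ∑ i', ∑ j ∈ range (k i'), (extL k a i' j : ZMod n) *
        ((if j = k i' then 1 else 0) + (if j + 1 = k i' then 1 else 0)) =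
      ((∑ i, extL k a i (k i - 1) : ℕ) : ZMod n) := by
    intro a
    push_cast
    refine Finset.sum_congr rfl fun i _ => ?_
    have := hk i
    rw [Finset.sum_eq_single (k i - 1)]
    · rw [if_neg (by omega), if_pos (by omega)]; simp
    · intro j hj hj2
      rw [Finset.mem_range] at hj
      rw [if_neg (by omega), if_neg (by omega)]; simp
    · intro h; exfalso; apply h; rw [Finset.mem_range]; omega
  rwa [this, this] at key

lemma sum_pairs (f : ℕ → ℕ) (m : ℕ) :
    ∑ j ∈ range (2 * m), f j = ∑ l ∈ range m, (f (2 * l) + f (2 * l + 1)) := by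
  induction m with
  | zero => simp
  | succ m ih =>
    rw [mul_add, Finset.sum_range_succ _ m, ← ih]
    rw [show 2 * m + 2 * 1 = 2 * m + 1 + 1 by ring, Finset.sum_range_succ, Finset.sum_range_succ]
    ring

lemma ge_of_cast {n : ℕ} [NeZero n] (x : ℕ) (h : (x : ZMod n) = ((n - 1 : ℕ) : ZMod n)) :
    n - 1 ≤ x := by
  have hn := NeZero.ne n
  have h1 := congrArg ZMod.val h
  rw [ZMod.val_natCast, ZMod.val_natCast, Nat.mod_eq_of_lt (show n - 1 < n by omega)] at h1
  rw [← h1]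
  exact Nat.mod_le _ _

/-- pairs of consecutive edges of a path have total weight at least `n-1` -/
lemma pair_bound {n r : ℕ} [NeZero n] (k : Fin r → ℕ) (A b : ((i : Fin r) × Fin (k i)) → ℕ)
    (h : Multigraph.Eqv n (parallelComp k) (fun e => (b e : ZMod n)) (fun e => (A e : ZMod n)))
    (i : Fin r) (hA : ∀ l < k i / 2, extL k A i (2 * l) + extL k A i (2 * l + 1) = n - 1) :
    k i / 2 * (n - 1) ≤ ∑ j ∈ range (2 * (k i / 2)), extL k b i j := by
  rw [sum_pairs]
  calc k i / 2 * (n - 1) = ∑ _l ∈ range (k i / 2), (n - 1) := by simp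
    _ ≤ _ := by
      refine Finset.sum_le_sum fun l hl => ?_
      rw [Finset.mem_range] at hl
      apply ge_of_cast
      rw [test_mid k b A h i (2 * l) (by omega), hA l hl]

lemma lower_even {n r : ℕ} [NeZero n] (k : Fin r → ℕ) (hev : ∀ i, Even (k i)) :
    ∃ A : ((i : Fin r) × Fin (k i)) → ℕ, ∑ e, A e = (∑ i, k i / 2) * (n - 1) ∧
      ∀ b : ((i : Fin r) × Fin (k i)) → ℕ,
        Multigraph.Eqv n (parallelComp k) (fun e => (b e : ZMod n)) (fun e => (A e : ZMod n)) →
        (∑ i, k i / 2) * (n - 1) ≤ ∑ e, b e := by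
  have hk2 : ∀ i, 2 * (k i / 2) = k i := fun i => Nat.two_mul_div_two_of_even (hev i)
  let A : ((i : Fin r) × Fin (k i)) → ℕ := fun e => if Odd (e.2 : ℕ) then n - 1 else 0
  have hA : ∀ i, ∀ l < k i / 2, extL k A i (2 * l) + extL k A i (2 * l + 1) = n - 1 := by
    intro i l hl
    simp only [extL, A]
    rw [dif_pos (by omega), dif_pos (by omega), if_neg (by simp), if_pos ⟨l, rfl⟩, zero_add]
  refine ⟨A, ?_, ?_⟩
  · rw [sum_extL, Finset.sum_mul]
    refine Finset.sum_congr rfl fun i _ => ?_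
    rw [← hk2 i, sum_pairs, Finset.sum_congr rfl (g := fun _ => n - 1)]
    · simp
    · intro l hl
      rw [Finset.mem_range] at hl
      exact hA i l hl
  · intro b hb
    rw [sum_extL, Finset.sum_mul]
    refine Finset.sum_le_sum fun i _ => ?_
    have := pair_bound k A b hb i (hA i)
    rwa [hk2 i] at this

lemma lower_odd {n r : ℕ} [NeZero n] (k : Fin r → ℕ) (hr : 0 < r) (hodd : ∀ i, Odd (k i)) :
    ∃ A : ((i : Fin r) × Fin (k i)) → ℕ, ∑ e, A e = (∑ i, k i / 2) * (n - 1) + (n - 1) ∧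
      ∀ b : ((i : Fin r) × Fin (k i)) → ℕ,
        Multigraph.Eqv n (parallelComp k) (fun e => (b e : ZMod n)) (fun e => (A e : ZMod n)) →
        (∑ i, k i / 2) * (n - 1) + (n - 1) ≤ ∑ e, b e := by
  have hk2 : ∀ i, 2 * (k i / 2) + 1 = k i := fun i => Nat.two_mul_div_two_add_one_of_odd (hodd i)
  have hk : ∀ i, 0 < k i := fun i => (hodd i).pos
  let A : ((i : Fin r) × Fin (k i)) → ℕ := fun e => if Odd (e.2 : ℕ) then n - 1 else
    if e.1 = ⟨0, hr⟩ ∧ (e.2 : ℕ) = k e.1 - 1 then n - 1 else 0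
  have hA : ∀ i, ∀ l < k i / 2, extL k A i (2 * l) + extL k A i (2 * l + 1) = n - 1 := by
    intro i l hl
    have := hk2 i
    simp only [extL, A]
    have ho : ¬ Odd (2 * l) := by simp
    have ho2 : Odd (2 * l + 1) := ⟨l, rfl⟩
    have hne : ¬ (i = ⟨0, hr⟩ ∧ 2 * l = k i - 1) := by omega
    rw [dif_pos (by omega), dif_pos (by omega), if_neg ho, if_neg hne, if_pos ho2, zero_add]
  have hA2 : ∑ i, extL k A i (k i - 1) = n - 1 := by
    rw [Finset.sum_eq_single ⟨0, hr⟩]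
    · have h1 := hk2 ⟨0, hr⟩
      simp only [extL, A]
      rw [dif_pos (by omega), if_neg (by rw [Nat.not_odd_iff_even]; exact ⟨k ⟨0, hr⟩ / 2, by omega⟩),
        if_pos (by simp)]
    · intro i _ hi
      have h1 := hk2 i
      simp only [extL, A]
      rw [dif_pos (by omega), if_neg (by rw [Nat.not_odd_iff_even]; exact ⟨k i / 2, by omega⟩),
        if_neg (by tauto)]
    · simp
  have hsplit : ∀ b : ((i : Fin r) × Fin (k i)) → ℕ, ∑ e, b e =
      (∑ i, ∑ j ∈ range (2 * (k i / 2)), extL k b i j) + ∑ i, extL k b i (k i - 1) := by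
    intro b
    rw [sum_extL, ← Finset.sum_add_distrib]
    refine Finset.sum_congr rfl fun i _ => ?_
    have h1 : range (k i) = range (2 * (k i / 2) + 1) := by rw [hk2 i]
    have h2 : k i - 1 = 2 * (k i / 2) := by have := hk2 i; omega
    rw [h1, Finset.sum_range_succ, h2]
  refine ⟨A, ?_, ?_⟩
  · rw [hsplit, hA2, Finset.sum_mul]
    congr 1
    refine Finset.sum_congr rfl fun i _ => ?_
    rw [sum_pairs, Finset.sum_congr rfl (g := fun _ => n - 1)]
    · simp
    · intro l hl
      rw [Finset.mem_range] at hl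
      exact hA i l hl
  · intro b hb
    rw [hsplit, Finset.sum_mul]
    refine add_le_add (Finset.sum_le_sum fun i _ => pair_bound k A b hb i (hA i)) ?_
    apply ge_of_cast
    rw [test_last k hk b A hb, hA2]

lemma sum_pathW {n r : ℕ} [NeZero n] (k : Fin r → ℕ) (a : ((i : Fin r) × Fin (k i)) → ZMod n)
    (c : Fin r → ZMod n) :
    ((∑ e, (a e + (-1) ^ (e.2 : ℕ) * c e.1).val : ℕ) : ℤ) =
      ∑ i, pathW (k i) (fun j => a ⟨i, j⟩) (c i) := by
  rw [Fintype.sum_sigma]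
  push_cast
  rfl

lemma sum_cast_eq {n r : ℕ} [NeZero n] (k : Fin r → ℕ) (a : ((i : Fin r) × Fin (k i)) → ZMod n)
    (c : Fin r → ZMod n) (hc : ∑ i, c i = 0) (hpar : (∀ i, Even (k i)) ∨ ∀ i, Odd (k i)) :
    ((∑ e, (a e + (-1) ^ (e.2 : ℕ) * c e.1).val : ℕ) : ZMod n) = ∑ e, a e := by
  have h := congrArg (Int.cast : ℤ → ZMod n) (sum_pathW k a c)
  rw [Int.cast_natCast, Int.cast_sum] at h
  rw [h, Fintype.sum_sigma]
  simp only [pathW_cast, Finset.sum_add_distrib]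
  rw [add_eq_left]
  rcases hpar with hp | hp
  · simp [hp]
  · have : ∀ i, ¬ Even (k i) := fun i => Nat.not_even_iff_odd.2 (hp i)
    simp [this, hc]

lemma upper_even {n r : ℕ} [NeZero n] (hr : 2 ≤ r) (k : Fin r → ℕ) (hk : ∀ i, 0 < k i)
    (hev : ∀ i, Even (k i)) (a : ((i : Fin r) × Fin (k i)) → ZMod n) :
    ∃ b : ((i : Fin r) × Fin (k i)) → ℕ,
      Multigraph.Eqv n (parallelComp k) (fun e => (b e : ZMod n)) a ∧
      ((∑ e, b e : ℕ) : ZMod n) = ∑ e, a e ∧ ∑ e, b e ≤ (∑ i, k i / 2) * (n - 1) := by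
  have hn := NeZero.ne n
  obtain ⟨c, hc, hc2⟩ := even_B r hr (fun i => pathW (k i) (fun j => a ⟨i, j⟩))
    (fun i => (k i : ℤ) * (n - 1)) (fun i => by rw [pathW_sum]; exact le_of_eq (by ring))
  refine ⟨fun e => (a e + (-1) ^ (e.2 : ℕ) * c e.1).val, ?_, sum_cast_eq k a c hc (Or.inl hev), ?_⟩
  · have := eqv_twist k hk 1 (fun i => (hev i).neg_one_pow) a c hc
    simpa using this
  · have h1 := sum_pathW k a c
    have h2 : ∑ i, (k i : ℤ) * (n - 1) = 2 * (((∑ i, k i / 2) * (n - 1) : ℕ) : ℤ) := by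
      rw [← Finset.sum_mul]
      have : ∑ i, (k i : ℤ) = 2 * ((∑ i, k i / 2 : ℕ) : ℤ) := by
        rw [Nat.cast_sum, Finset.mul_sum]
        refine Finset.sum_congr rfl fun i _ => ?_
        have := Nat.two_mul_div_two_of_even (hev i)
        omega
      rw [this, Nat.cast_mul, Nat.cast_sub (by omega)]
      push_cast
      ring
    rw [← h1, h2] at hc2
    have h3 := le_of_mul_le_mul_left hc2 (by norm_num)
    exact_mod_cast h3

lemma upper_odd {n r : ℕ} [NeZero n] (hr : 2 ≤ r) (k : Fin r → ℕ)
    (hodd : ∀ i, Odd (k i)) (a : ((i : Fin r) × Fin (k i)) → ZMod n) :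
    ∃ b : ((i : Fin r) × Fin (k i)) → ℕ,
      Multigraph.Eqv n (parallelComp k) (fun e => (b e : ZMod n)) a ∧
      ((∑ e, b e : ℕ) : ZMod n) = ∑ e, a e ∧ ∑ e, b e ≤ (∑ i, k i / 2) * (n - 1) + (n - 1) := by
  have hn := NeZero.ne n
  have hk : ∀ i, 0 < k i := fun i => (hodd i).pos
  have hk2 : ∀ i, (k i : ℤ) = 2 * ((k i / 2 : ℕ) : ℤ) + 1 := by
    intro i
    have := Nat.two_mul_div_two_add_one_of_odd (hodd i)
    omega
  obtain ⟨c, hc, hc2⟩ := odd_B r hr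
    (fun i c => pathW (k i) (fun j => a ⟨i, j⟩) c - ((k i / 2 : ℕ) : ℤ) * (n - 1))
    (fun i => (∑ j, a ⟨i, j⟩) - (((k i / 2 : ℕ) : ℤ) * (n - 1) : ℤ))
    (fun i => by
      rw [Finset.sum_sub_distrib, mul_sub, pathW_sum, hk2 i]
      simp only [Finset.sum_const, Finset.card_univ, ZMod.card, nsmul_eq_mul]
      exact le_of_eq (by ring))
    (fun i c => by
      rw [Int.cast_sub, pathW_cast, if_neg (Nat.not_even_iff_odd.2 (hodd i))]
      ring)
  refine ⟨fun e => (a e + (-1) ^ (e.2 : ℕ) * c e.1).val, ?_, sum_cast_eq k a c hc (Or.inr hodd), ?_⟩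
  · have := eqv_twist k hk (-1) (fun i => (hodd i).neg_one_pow) a c hc
    simpa using this
  · have h1 := sum_pathW k a c
    rw [Finset.sum_sub_distrib, ← h1, ← Finset.sum_mul, ← Nat.cast_sum] at hc2
    have h4 : ((n - 1 : ℕ) : ℤ) = n - 1 := by
      rw [Nat.cast_sub (by omega)]; simp
    rw [← h4] at hc2
    have h5 := sub_le_iff_le_add'.1 hc2
    exact_mod_cast h5

end PartThree

/-- **Theorem 1.1.**  Let `G` be the parallel composition of `r ≥ 2` paths of lengths
`k 0, ..., k (r-1)`, all of the same parity.  If all `k i` are odd then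
`reg G = (⌊k 0/2⌋ + ... + ⌊k (r-1)/2⌋)(q-2)`; if all `k i` are even then
`reg G = (k 0/2 + ... + k (r-1)/2 - 1)(q-2)`, where `q = |K|`. -/
theorem reg_parallelComp_same_parity
    (K : Type) [Field K] [Fintype K] (r : ℕ) (hr : 2 ≤ r)
    (k : Fin r → ℕ) (hk : ∀ i, 0 < k i)
    (hpar : ∀ i j, (Odd (k i) ↔ Odd (k j))) :
    ((∀ i, Odd (k i)) →
      (parallelComp k).reg K = (∑ i, k i / 2) * (Fintype.card K - 2)) ∧
    ((∀ i, Even (k i)) →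
      (parallelComp k).reg K = ((∑ i, k i / 2) - 1) * (Fintype.card K - 2)) := by

  have hcard := Fintype.one_lt_card (α := K)
  have hN : Fintype.card K - 2 = Fintype.card K - 1 - 1 := by omega
  have : NeZero (Fintype.card K - 1) := ⟨by omega⟩
  have e₀ : (i : Fin r) × Fin (k i) := ⟨⟨0, by omega⟩, ⟨0, hk _⟩⟩
  constructor
  · intro hodd
    apply reg_eq_of K _ e₀
    · rw [hN]
      exact upper_odd hr k hodd
    · rw [hN]
      exact lower_odd k (by omega) hodd
  · intro hev
    have hpos : 1 ≤ ∑ i, k i / 2 := by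
      have h1 : k ⟨0, by omega⟩ / 2 ≤ ∑ i, k i / 2 :=
        Finset.single_le_sum (f := fun i => k i / 2) (fun _ _ => Nat.zero_le _) (Finset.mem_univ _)
      obtain ⟨m, hm⟩ := hev ⟨0, by omega⟩
      have := hk ⟨0, by omega⟩
      omega
    have hW : ((∑ i, k i / 2) - 1) * (Fintype.card K - 2) + (Fintype.card K - 2) =
        (∑ i, k i / 2) * (Fintype.card K - 1 - 1) := by
      rw [hN, ← Nat.succ_mul]; congr 1; omega
    apply reg_eq_of K _ e₀
    · rw [hW]
      exact upper_even hr k hk hev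
    · rw [hW]
      exact lower_even k hev
end

section
/- Let G be a graph with X the projective toric subset it parameterizes. Let u_0, u_1, ..., u_m be distinct vertices of G joined consecutively by edges e_1,...,e_m of G (e_p has endpoints u_{p−1} and u_p), and suppose every interior vertex u_1,...,u_{m−1} has degree 2 in G. Let t_i = e_p and t_j = e_{p'} be two of these edges with p ≡ p' (mod 2), and let σ : S → S be the K-algebra automorphism that swaps the variables t_i and t_j and fixes all other variables. Then for any homogeneous binomial t^a − t^b in S, one has t^a − t^b ∈ I(X) if and only if σ(t^a) − σ(t^b) ∈ I(X). -/
open MvPolynomial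

lemma swapEar_mem {V E : Type} [Fintype E] (K : Type) [Field K] [Fintype K]
    (G : Multigraph V E) (a b : E →₀ ℕ)
    (hhom : (a.sum fun _ n => n) = b.sum fun _ n => n) :
    monomial a (1 : K) - monomial b 1 ∈ G.vanishingIdeal K ↔
      ∀ x : V → Kˣ, ∏ i, (x (G.fst i) * x (G.snd i)) ^ ((a i : ℤ) - (b i : ℤ)) = 1 := by
  have key : ∀ x : V → Kˣ,
      (∏ i, (x (G.fst i) * x (G.snd i)) ^ ((a i : ℤ) - (b i : ℤ)) = 1 ↔
        eval (G.point K x) (monomial a (1 : K) - monomial b 1) = 0) := by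
    intro x
    simp only [zpow_sub, zpow_natCast, Finset.prod_mul_distrib, Finset.prod_inv_distrib]
    rw [mul_inv_eq_one, map_sub, sub_eq_zero, eval_monomial, eval_monomial,
      Finsupp.prod_fintype _ _ (by simp), Finsupp.prod_fintype _ _ (by simp), one_mul, one_mul,
      Units.ext_iff]
    simp [Multigraph.point, Units.coe_prod]
  have hmem : monomial a (1 : K) - monomial b 1 ∈ homogeneousSubmodule E K
      (a.sum fun _ n => n) := by
    refine Submodule.sub_mem _ ?_ ?_
    · exact isHomogeneous_monomial _ rfl
    · rw [hhom]; exact isHomogeneous_monomial _ rfl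
  constructor
  · intro h x
    rw [key]
    have := h x (a.sum fun _ n => n)
    rwa [homogeneousComponent_of_mem hmem, if_pos rfl] at this
  · intro h x d
    rw [homogeneousComponent_of_mem hmem]
    split_ifs
    · exact (key x).1 (h x)
    · simp

lemma swapEar_vertex {V E : Type} [DecidableEq V] [Fintype E] [DecidableEq E]
    {M : Type} [CommGroup M] (G : Multigraph V E) (z : E → ℤ)
    (h : ∀ x : V → M, ∏ i, (x (G.fst i) * x (G.snd i)) ^ (z i) = 1)
    (v : V) (hv : G.degree v = 2) (i j : E) (hij : i ≠ j)
    (hi : G.Incident v i) (hj : G.Incident v j) (y : M) :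
    y ^ (z i + z j) = 1 := by
  have hcard : (Finset.univ.filter fun k => G.Incident v k).card = 2 := by
    rw [← hv, Multigraph.degree, Nat.card_eq_fintype_card, Fintype.card_subtype]
  have hset : ({i, j} : Finset E) = Finset.univ.filter fun k => G.Incident v k := by
    apply Finset.eq_of_subset_of_card_le
    · intro k hk
      simp only [Finset.mem_insert, Finset.mem_singleton] at hk
      rcases hk with rfl | rfl <;> simp [hi, hj]
    · rw [hcard, Finset.card_pair hij]
  have h1 := h (Pi.mulSingle v y)
  have h2 : ∀ k, ((Pi.mulSingle v y : V → M) (G.fst k) * (Pi.mulSingle v y : V → M) (G.snd k)) ^ (z k)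
      = if G.Incident v k then y ^ (z k) else 1 := by
    intro k
    have := G.ne k
    by_cases ha : G.fst k = v
    · have hb : G.snd k ≠ v := fun hb => this (ha.trans hb.symm)
      simp [Multigraph.Incident, Pi.mulSingle_apply, ha, hb]
    · by_cases hb : G.snd k = v <;>
      simp [Multigraph.Incident, Pi.mulSingle_apply, ha, hb]
  rw [Finset.prod_congr rfl fun k _ => h2 k, ← Finset.prod_filter, ← hset,
    Finset.prod_pair hij] at h1
  rw [zpow_add, h1]

lemma swapEar_path
    {V E : Type} [DecidableEq V] [Fintype E] [DecidableEq E]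
    {M : Type} [CommGroup M] (G : Multigraph V E) (m : ℕ)
    (u : Fin (m + 1) → V) (hu : Function.Injective u) (e : Fin m → E)
    (he : ∀ p : Fin m,
      (G.fst (e p) = u p.castSucc ∧ G.snd (e p) = u p.succ) ∨
      (G.fst (e p) = u p.succ ∧ G.snd (e p) = u p.castSucc))
    (hdeg : ∀ j : Fin (m + 1), j ≠ 0 → j ≠ Fin.last m → G.degree (u j) = 2)
    (z : E → ℤ)
    (h : ∀ x : V → M, ∏ i, (x (G.fst i) * x (G.snd i)) ^ (z i) = 1)
    (y : M) (n k : ℕ) (hn : n + 2 * k < m) :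
    y ^ z (e ⟨n + 2 * k, hn⟩) = y ^ z (e ⟨n, by omega⟩) := by
  have step : ∀ (r : ℕ) (hr : r + 1 < m),
      y ^ (z (e ⟨r, by omega⟩) + z (e ⟨r + 1, hr⟩)) = 1 := by
    intro r hr
    have e1 := he ⟨r, by omega⟩
    have e2 := he ⟨r + 1, hr⟩
    have hv := hdeg ⟨r + 1, by omega⟩ (by simp [Fin.ext_iff]) (by simp [Fin.ext_iff]; omega)
    simp only [Fin.castSucc_mk, Fin.succ_mk] at e1 e2
    refine swapEar_vertex G z h _ hv _ _ ?_ ?_ ?_ y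
    · intro heq
      rw [heq] at e1
      have n1 : u ⟨r, by omega⟩ ≠ u ⟨r + 1, by omega⟩ := fun hh => by simpa using hu hh
      have n2 : u ⟨r, by omega⟩ ≠ u ⟨r + 1 + 1, by omega⟩ := fun hh => by
        have := hu hh
        simp only [Fin.mk.injEq] at this
        omega
      rcases e1 with ⟨p1, p2⟩ | ⟨p1, p2⟩ <;> rcases e2 with ⟨q1, q2⟩ | ⟨q1, q2⟩
      · exact n1 (p1.symm.trans q1)
      · exact n2 (p1.symm.trans q1)
      · exact n2 (p2.symm.trans q2)
      · exact n1 (p2.symm.trans q2)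
    · unfold Multigraph.Incident; tauto
    · unfold Multigraph.Incident; tauto
  induction k with
  | zero => rfl
  | succ k ih =>
    rw [← ih (by omega) step]
    have s1 := step (n + 2 * k) (by omega)
    have s2 := step (n + 2 * k + 1) (by omega)
    rw [zpow_add] at s1 s2
    have : y ^ z (e ⟨n + 2 * k, by omega⟩) = (y ^ z (e ⟨n + 2 * k + 1, by omega⟩))⁻¹ :=
      eq_inv_of_mul_eq_one_left s1
    rw [this]
    exact eq_inv_of_mul_eq_one_right s2

lemma swapEar_one
    {V E : Type} [DecidableEq V] [Fintype E] [DecidableEq E]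
    {M : Type} [CommGroup M] (G : Multigraph V E) (m : ℕ)
    (u : Fin (m + 1) → V) (hu : Function.Injective u) (e : Fin m → E)
    (he : ∀ p : Fin m,
      (G.fst (e p) = u p.castSucc ∧ G.snd (e p) = u p.succ) ∨
      (G.fst (e p) = u p.succ ∧ G.snd (e p) = u p.castSucc))
    (hdeg : ∀ j : Fin (m + 1), j ≠ 0 → j ≠ Fin.last m → G.degree (u j) = 2)
    (p p' : Fin m) (hpar : p.1 % 2 = p'.1 % 2)
    (z : E → ℤ)
    (h : ∀ x : V → M, ∏ i, (x (G.fst i) * x (G.snd i)) ^ (z i) = 1) (x : V → M) :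
    ∏ i, (x (G.fst i) * x (G.snd i)) ^ (z (Equiv.swap (e p) (e p') i)) = 1 := by
  have hz : ∀ y : M, y ^ z (e p) = y ^ z (e p') := by
    intro y
    obtain ⟨p, hp⟩ := p
    obtain ⟨p', hp'⟩ := p'
    simp only at hpar
    rcases le_total p p' with hle | hle
    · obtain ⟨k, rfl⟩ : ∃ k, p' = p + 2 * k := ⟨(p' - p) / 2, by omega⟩
      exact (swapEar_path G m u hu e he hdeg z h y p k hp').symm
    · obtain ⟨k, rfl⟩ : ∃ k, p = p' + 2 * k := ⟨(p - p') / 2, by omega⟩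
      exact swapEar_path G m u hu e he hdeg z h y p' k hp
  rw [← h x]
  refine Finset.prod_congr rfl fun i _ => ?_
  rw [Equiv.swap_apply_def]
  split_ifs with h1 h2
  · rw [h1, hz]
  · rw [h2, hz]
  · rfl

/-- **Lemma 2.2** (swapping edges along an ear).  Let `u 0, ..., u m` be distinct
vertices of `G` joined consecutively by edges `e 0, ..., e (m-1)`, every interior
vertex having degree `2` in `G`.  If `e p` and `e p'` are two of those edges in the
same parity position, and `σ` swaps the corresponding two variables, then for a
homogeneous binomial `t^a - t^b` one has `t^a - t^b ∈ I(X) ↔ σ(t^a) - σ(t^b) ∈ I(X)`. -/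
theorem vanishingIdeal_swap_ear
    {V E : Type} [Fintype V] [DecidableEq V] [Fintype E] [DecidableEq E]
    (K : Type) [Field K] [Fintype K]
    (G : Multigraph V E) (hG : G.NoIsolated) (m : ℕ)
    (u : Fin (m + 1) → V) (hu : Function.Injective u) (e : Fin m → E)
    (he : ∀ p : Fin m,
      (G.fst (e p) = u p.castSucc ∧ G.snd (e p) = u p.succ) ∨
      (G.fst (e p) = u p.succ ∧ G.snd (e p) = u p.castSucc))
    (hdeg : ∀ j : Fin (m + 1), j ≠ 0 → j ≠ Fin.last m → G.degree (u j) = 2)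
    (p p' : Fin m) (hpar : p.1 % 2 = p'.1 % 2)
    (a b : E →₀ ℕ) (hhom : (a.sum fun _ n => n) = b.sum fun _ n => n) :
    monomial a (1 : K) - monomial b 1 ∈ G.vanishingIdeal K ↔
      rename (Equiv.swap (e p) (e p')) (monomial a (1 : K)) -
        rename (Equiv.swap (e p) (e p')) (monomial b 1) ∈ G.vanishingIdeal K := by
  classical
  rw [rename_monomial, rename_monomial, swapEar_mem K G a b hhom, swapEar_mem]
  · simp only [Finsupp.mapDomain_equiv_apply, Equiv.symm_swap]
    constructor
    · intro h x
      exact swapEar_one G m u hu e he hdeg p p' hpar (fun i => (a i : ℤ) - (b i : ℤ)) h x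
    · intro h x
      have := swapEar_one G m u hu e he hdeg p p' hpar _ h x
      simpa using this
  · rw [Finsupp.sum_mapDomain_index (by simp) (by simp),
      Finsupp.sum_mapDomain_index (by simp) (by simp)]
    exact hhom
end

section
/- Let G be a graph with X the projective toric subset it parameterizes, and let g ∈ S be a monomial. A monomial t^a ∈ S belongs to the ideal (I(X), g) of S if and only if there exists a monomial t^b ∈ S such that t^a − g·t^b is homogeneous (i.e., deg t^a = deg g + deg t^b) and belongs to I(X). -/
open MvPolynomial

/-- The character of the torus defined by a monomial. -/
noncomputable def monoChar {V E : Type} (K : Type) [Field K] [Fintype K]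
    (G : Multigraph V E) (n : E →₀ ℕ) : (V → Kˣ) →* K where
  toFun x := eval (G.point K x) (monomial n (1 : K))
  map_one' := by simp [eval_monomial, Multigraph.point]
  map_mul' x y := by
    simp only [eval_monomial, one_mul, Finsupp.prod, ← Finset.prod_mul_distrib, ← mul_pow]
    refine Finset.prod_congr rfl fun e _ => ?_
    simp only [Multigraph.point, Pi.mul_apply, Units.val_mul]
    ring

theorem eval_monomial_eq_monoChar {V E : Type} (K : Type) [Field K] [Fintype K]
    (G : Multigraph V E) (n : E →₀ ℕ) (r : K) (x : V → Kˣ) :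
    eval (G.point K x) (monomial n r) = r * monoChar K G n x := by
  simp [monoChar, eval_monomial]

/-- **Proposition 2.3(ii).**  Let `g = t^c` be a monomial.  A monomial `t^a` belongs
to the ideal `(I(X), g)` if and only if there is a monomial `t^b` such that
`t^a - g·t^b` is homogeneous and belongs to `I(X)`. -/
theorem monomial_mem_vanishingIdeal_sup_span
    {V E : Type} [Fintype V] [DecidableEq V] [Fintype E] [DecidableEq E]
    (K : Type) [Field K] [Fintype K]
    (G : Multigraph V E) (hG : G.NoIsolated) (c a : E →₀ ℕ) :
    monomial a (1 : K) ∈ G.vanishingIdeal K ⊔ Ideal.span {monomial c (1 : K)} ↔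
      ∃ b : E →₀ ℕ,
        (a.sum fun _ n => n) = (c.sum fun _ n => n) + (b.sum fun _ n => n) ∧
        monomial a (1 : K) - monomial c 1 * monomial b 1 ∈ G.vanishingIdeal K := by
  have hdeg : ∀ n : E →₀ ℕ, (n.sum fun _ k => k) = n.degree := fun n => rfl
  simp only [hdeg]
  constructor
  · intro h
    obtain ⟨f, hf, p, hp, hfp⟩ := Submodule.mem_sup.mp h
    obtain ⟨h', rfl⟩ := Ideal.mem_span_singleton'.mp hp
    set p := h' * monomial c (1 : K) with hpdef
    let S : Set ((V → Kˣ) →* K) :=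
      {χ | ∃ b : E →₀ ℕ, a.degree = c.degree + b.degree ∧ χ = monoChar K G (c + b)}
    have key : monoChar K G a ∈ S := by
      by_contra hS
      refine (linearIndependent_monoidHom (V → Kˣ) K).notMem_span_image hS ?_
      have e1 : ((monoChar K G a : (V → Kˣ) →* K) : (V → Kˣ) → K) =
          ∑ n ∈ p.support with n.degree = a.degree,
            coeff n p • ((monoChar K G n : (V → Kˣ) →* K) : (V → Kˣ) → K) := by
        funext x
        have h1 := hf x a.degree
        have h2 : f = monomial a 1 - p := eq_sub_of_add_eq hfp
        rw [h2, map_sub, map_sub, sub_eq_zero, homogeneousComponent_of_mem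
          ((mem_homogeneousSubmodule _ _).mpr (isHomogeneous_monomial (n := a.degree) 1 rfl)),
          if_pos rfl, eval_monomial_eq_monoChar, one_mul, homogeneousComponent_apply,
          map_sum] at h1
        rw [h1, Finset.sum_apply]
        exact Finset.sum_congr rfl fun n _ => by
          rw [eval_monomial_eq_monoChar, Pi.smul_apply, smul_eq_mul]
      rw [e1]
      refine Submodule.sum_mem _ fun n hn => Submodule.smul_mem _ _ (Submodule.subset_span ?_)
      rw [Finset.mem_filter, mem_support_iff, hpdef, coeff_mul_monomial'] at hn
      obtain ⟨hn1, hn2⟩ := hn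
      have hcn : c ≤ n := by
        by_contra hc
        exact hn1 (if_neg hc)
      refine ⟨monoChar K G n, ⟨n - c, ?_, ?_⟩, rfl⟩
      · rw [← map_add, add_tsub_cancel_of_le hcn, hn2]
      · rw [add_tsub_cancel_of_le hcn]
    obtain ⟨b, hb, hχ⟩ := key
    refine ⟨b, hb, fun x d => ?_⟩
    rw [monomial_mul, one_mul, map_sub, map_sub, homogeneousComponent_of_mem
      ((mem_homogeneousSubmodule _ _).mpr (isHomogeneous_monomial (n := a.degree) 1 rfl)),
      homogeneousComponent_of_mem
      ((mem_homogeneousSubmodule _ _).mpr (isHomogeneous_monomial (n := a.degree) 1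
        (by rw [hb, map_add])))]
    split_ifs
    · rw [eval_monomial_eq_monoChar, eval_monomial_eq_monoChar, hχ, sub_self]
    · simp
  · rintro ⟨b, -, hb⟩
    rw [← sub_add_cancel (monomial a (1 : K)) (monomial c 1 * monomial b 1)]
    exact Submodule.add_mem_sup hb
      (Ideal.mul_mem_right _ _ (Ideal.subset_span (Set.mem_singleton _)))
end

section
/- Let G be a graph with X the projective toric subset it parameterizes, let v ∈ V_G be a vertex of degree 1, and assume |E_G| > 1. Let G' = G − v be the graph obtained by deleting v and its unique incident edge, let X' be the projective toric subset parameterized by G', and assume G' has no isolated vertices. Then reg(G) = reg(G') + (q−2). -/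
open MvPolynomial

section Aux

/-- Functions of weight `d` for scaling agree, on `A`, with homogeneous polynomials of degree `d`. -/
def RegProp {σ : Type} (K : Type) [Field K] (A : Set (σ → K)) (d : ℕ) : Prop :=
  ∀ f : (σ → K) → K, (∀ (c : Kˣ) (b : σ → K), f (c • b) = (c : K) ^ d * f b) →
    ∃ F : MvPolynomial σ K, F.IsHomogeneous d ∧ ∀ a ∈ A, eval a F = f a

theorem regProp_succ {σ : Type} {K : Type} [Field K] {A : Set (σ → K)} (e : σ)
    (hA : ∀ a ∈ A, a e ≠ 0) {d : ℕ} (h : RegProp K A d) : RegProp K A (d + 1) := by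
  intro f hf
  obtain ⟨F, hF, hFa⟩ := h (fun b => f b / b e) (by
    intro c b
    have hc : (c : K) ≠ 0 := c.ne_zero
    simp only [hf]
    simp only [Pi.smul_apply, Units.smul_def, smul_eq_mul]
    by_cases hb : b e = 0
    · simp [hb]
    · field_simp
      try ring)
  refine ⟨F * X e, hF.mul (isHomogeneous_X K e), fun a ha => ?_⟩
  have := hA a ha
  rw [map_mul, hFa a ha, eval_X]
  field_simp

theorem regProp_add {σ : Type} {K : Type} [Field K] {A : Set (σ → K)} (e : σ)
    (hA : ∀ a ∈ A, a e ≠ 0) {d : ℕ} (h : RegProp K A d) (k : ℕ) : RegProp K A (d + k) := by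
  induction k with
  | zero => exact h
  | succ k ih => exact regProp_succ e hA ih

theorem regProp_exists {σ : Type} [Fintype σ] {K : Type} [Field K] [Fintype K]
    {A : Set (σ → K)} (e : σ) (hA : ∀ a ∈ A, a e ≠ 0) : ∃ d, RegProp K A d := by
  classical
  set q := Fintype.card K with hq
  have hq2 : 1 < q := Fintype.one_lt_card
  set N := Fintype.card σ * (q - 1) with hN
  refine ⟨(q - 1) * N, fun f hf => ?_⟩
  have hf0 : ∀ (c : Kˣ) (b : σ → K), f (c • b) = f b := by
    intro c b
    rw [hf, pow_mul, FiniteField.pow_card_sub_one_eq_one _ c.ne_zero, one_pow, one_mul]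
  have hP : f ∈ (restrictDegree σ K (Fintype.card K - 1)).map (evalₗ K σ) := by
    rw [map_restrict_dom_evalₗ]; trivial
  obtain ⟨P, hPd, rfl⟩ := hP
  have hdeg : ∀ m ∈ P.support, ∑ i, m i ≤ N := by
    intro m hm
    have := (mem_restrictDegree σ P _).1 hPd m hm
    calc ∑ i, m i ≤ ∑ i : σ, (q - 1) := Finset.sum_le_sum fun i _ => this i
      _ = N := by simp [hN]
  refine ⟨∑ m ∈ P.support,
    monomial (m + Finsupp.single e ((q - 2) * (∑ i, m i) + (q - 1) * (N - ∑ i, m i))) (coeff m P),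
    ?_, ?_⟩
  · refine IsHomogeneous.sum _ _ _ fun m hm => isHomogeneous_monomial _ ?_
    have h1 := hdeg m hm
    rw [map_add, Finsupp.degree_single, Finsupp.degree_eq_sum]
    generalize ∑ i, m i = s at *
    obtain ⟨k, hk⟩ : ∃ k, N = s + k := ⟨N - s, by omega⟩
    obtain ⟨r, hr⟩ : ∃ r, q = r + 2 := ⟨q - 2, by omega⟩
    rw [hk, hr, show r + 2 - 2 = r by omega, show r + 2 - 1 = r + 1 by omega,
      show s + k - s = k by omega]
    ring
  · intro a ha
    have hae := hA a ha
    have := hf0 (Units.mk0 (a e) hae)⁻¹ a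
    rw [← this, evalₗ_apply, map_sum, eval_eq' _ P]
    refine Finset.sum_congr rfl fun m hm => ?_
    rw [eval_monomial, Finsupp.prod_fintype _ _ (by simp)]
    have h1 : (a e) ^ (q - 1) = 1 := FiniteField.pow_card_sub_one_eq_one _ hae
    have h2 : (a e) ^ (q - 2) = (a e)⁻¹ := by
      apply eq_inv_of_mul_eq_one_left
      rw [← pow_succ, ← h1]; congr 1; omega
    simp only [Finsupp.add_apply, pow_add, Finset.prod_mul_distrib, Units.smul_def, Pi.smul_apply,
      smul_eq_mul, Units.val_inv_eq_inv_val, Units.val_mk0, mul_pow]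
    rw [Finset.prod_pow_eq_pow_sum, Finset.prod_eq_single (a := e) (f := fun i => a i ^ (Finsupp.single e _) i)
      (by intro b _ hb; simp [Finsupp.single_eq_of_ne hb]) (by simp)]
    rw [Finsupp.single_eq_same, pow_add, pow_mul, pow_mul, h1, h2, one_pow, mul_one]
    ring

end Aux

namespace Multigraph

theorem point_ne_zero {V E K : Type} [Field K] (G : Multigraph V E) (e : E) :
    ∀ a ∈ Set.range (G.point K), a e ≠ 0 := by
  rintro _ ⟨x, rfl⟩
  exact mul_ne_zero (x _).ne_zero (x _).ne_zero

theorem eval_smul_hom {σ K : Type} [Fintype σ] [Field K] {d : ℕ} {F : MvPolynomial σ K}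
    (hF : F.IsHomogeneous d) (c : Kˣ) (b : σ → K) :
    eval (c • b) F = (c : K) ^ d * eval b F := by
  rw [eval_eq', eval_eq', Finset.mul_sum]
  refine Finset.sum_congr rfl fun m hm => ?_
  have hd : ∑ i, m i = d := by
    rw [← Finsupp.degree_eq_sum, Finsupp.degree_eq_weight_one]
    exact hF (mem_support_iff.1 hm)
  simp only [Pi.smul_apply, Units.smul_def, smul_eq_mul, mul_pow, Finset.prod_mul_distrib]
  rw [Finset.prod_pow_eq_pow_sum, hd]
  ring

theorem hilbert_eq_iff_s5 {V E : Type} [Fintype V] [Fintype E] (K : Type) [Field K] [Fintype K]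
    (G : Multigraph V E) (e : E) (d : ℕ) :
    G.hilbert K d = (G.toricSet K).ncard ↔ RegProp K (Set.range (G.point K)) d := by
  classical
  have hfin : Finite (G.toricSet K) := Set.finite_range _
  have := Fintype.ofFinite (G.toricSet K)
  choose r hr using fun O : G.toricSet K => O.2
  let H := homogeneousSubmodule E K d
  let f1 := (Ideal.Quotient.mkₐ K (G.vanishingIdeal K)).toLinearMap.domRestrict H
  let f2 : H →ₗ[K] (G.toricSet K → K) :=
    { toFun := fun F O => eval (G.point K (r O)) F.1
      map_add' := by intros; ext; simp
      map_smul' := by intros; ext; simp [smul_eval] }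
  have hpt : ∀ x : V → Kˣ, ∃ c : Kˣ, G.point K x = c • G.point K
      (r ⟨MulAction.orbit Kˣ (G.point K x), x, rfl⟩) := by
    intro x
    have h1 : MulAction.orbit Kˣ (G.point K (r ⟨MulAction.orbit Kˣ (G.point K x), x, rfl⟩)) =
      MulAction.orbit Kˣ (G.point K x) := hr ⟨MulAction.orbit Kˣ (G.point K x), x, rfl⟩
    have h2 : G.point K x ∈ MulAction.orbit Kˣ (G.point K x) := MulAction.mem_orbit_self _
    rw [← h1] at h2
    obtain ⟨c, hc⟩ := h2
    exact ⟨c, hc.symm⟩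
  have hker : LinearMap.ker f1 = LinearMap.ker f2 := by
    ext F
    have hF : F.1.IsHomogeneous d := (mem_homogeneousSubmodule _ _).1 F.2
    have e1 : F ∈ LinearMap.ker f1 ↔ F.1 ∈ G.vanishingIdeal K := by
      rw [LinearMap.mem_ker, ← Ideal.Quotient.eq_zero_iff_mem]; rfl
    rw [e1, LinearMap.mem_ker]
    constructor
    · intro h
      ext O
      have := h (r O) d
      rw [homogeneousComponent_of_mem F.2, if_pos rfl] at this
      exact this
    · intro h x n
      rw [homogeneousComponent_of_mem F.2]
      split_ifs with hn
      · obtain ⟨c, hc⟩ := hpt x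
        rw [hc, eval_smul_hom hF]
        have := congrFun h ⟨MulAction.orbit Kˣ (G.point K x), x, rfl⟩
        change eval _ F.1 = 0 at this
        rw [this, mul_zero]
      · simp
  have hh : G.hilbert K d = Module.finrank K (LinearMap.range f2) := by
    have : G.hilbert K d = Module.finrank K (LinearMap.range f1) := by
      rw [LinearMap.range_domRestrict]; rfl
    rw [this, ← f1.quotKerEquivRange.finrank_eq, ← f2.quotKerEquivRange.finrank_eq, hker]
  have hcard : (G.toricSet K).ncard = Module.finrank K (G.toricSet K → K) := by
    rw [Module.finrank_fintype_fun_eq_card, ← Nat.card_coe_set_eq, Nat.card_eq_fintype_card]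
  rw [hh, hcard]
  have hs : Module.finrank K (LinearMap.range f2) = Module.finrank K (G.toricSet K → K) ↔
      Function.Surjective f2 := by
    rw [← LinearMap.range_eq_top]
    exact ⟨fun h => Submodule.eq_top_of_finrank_eq h, fun h => by rw [h, finrank_top]⟩
  rw [hs]
  constructor
  · intro h f hf
    obtain ⟨F, hF⟩ := h (fun O => f (G.point K (r O)))
    have hFh : F.1.IsHomogeneous d := (mem_homogeneousSubmodule _ _).1 F.2
    refine ⟨F.1, hFh, ?_⟩
    rintro _ ⟨x, rfl⟩
    obtain ⟨c, hc⟩ := hpt x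
    rw [hc, hf, eval_smul_hom hFh]
    congr 1
    exact congrFun hF ⟨MulAction.orbit Kˣ (G.point K x), x, rfl⟩
  · intro h g
    obtain ⟨F, hF, hFa⟩ := h (fun b =>
      if hb : MulAction.orbit Kˣ b ∈ G.toricSet K then
        g ⟨_, hb⟩ * (b e / G.point K (r ⟨_, hb⟩) e) ^ d else 0) (by
      intro c b
      have ho : MulAction.orbit Kˣ (c • b) = MulAction.orbit Kˣ b := MulAction.orbit_smul c b
      simp only [ho]
      split_ifs
      · simp only [Pi.smul_apply, Units.smul_def, smul_eq_mul]
        ring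
      · simp)
    refine ⟨⟨F, (mem_homogeneousSubmodule _ _).2 hF⟩, ?_⟩
    ext O
    change eval (G.point K (r O)) F = g O
    rw [hFa _ ⟨_, rfl⟩]
    have h1 : MulAction.orbit Kˣ (G.point K (r O)) = O.1 := hr O
    simp only [h1, O.2, dite_true]
    rw [div_self (G.point_ne_zero e _ ⟨_, rfl⟩)]
    simp

end Multigraph

section Glue

variable {σ : Type} {p : σ → Prop} [DecidablePred p] {K : Type}

/-- Extend a function on the complement of `p` by the constant `z` on `p`. -/
def glue (y : {e : σ // ¬ p e} → K) (z : K) : σ → K :=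
  fun e => if h : p e then z else y ⟨e, h⟩

theorem glue_pos {e : σ} (h : p e) (y : {e : σ // ¬ p e} → K) (z : K) : glue y z e = z := by
  simp [glue, h]

theorem glue_coe (i : {e : σ // ¬ p e}) (y : {e : σ // ¬ p e} → K) (z : K) :
    glue y z i.1 = y i := by
  simp [glue, i.2]

theorem glue_comp (y : {e : σ // ¬ p e} → K) (z : K) :
    glue y z ∘ Subtype.val = y := by
  ext i; exact glue_coe i y z

theorem glue_smul [Field K] (c : Kˣ) (y : {e : σ // ¬ p e} → K) (z : K) :
    glue (c • y) ((c : K) * z) = c • glue y z := by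
  ext e
  by_cases h : p e <;> simp [glue, h, Units.smul_def]

theorem prod_split {M : Type} [CommMonoid M] [Fintype σ] {e₀ : σ} (hp : ∀ e, p e ↔ e = e₀)
    (f : σ → M) : ∏ i, f i = f e₀ * ∏ i : {e : σ // ¬ p e}, f i.1 := by
  rw [← Fintype.prod_subtype_mul_prod_subtype p f]
  congr 1
  have : Unique {e : σ // p e} :=
    { default := ⟨e₀, (hp e₀).2 rfl⟩, uniq := fun a => Subtype.ext ((hp a.1).1 a.2) }
  rw [Fintype.prod_unique]
  exact congrArg f ((hp _).1 (default : {e : σ // p e}).2)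

theorem sum_split {M : Type} [AddCommMonoid M] [Fintype σ] {e₀ : σ} (hp : ∀ e, p e ↔ e = e₀)
    (f : σ → M) : ∑ i, f i = f e₀ + ∑ i : {e : σ // ¬ p e}, f i.1 :=
  prod_split (M := Multiplicative M) hp f

variable [Field K] [Fintype K]

theorem geom_units [DecidableEq K] {w : K} (hw : w ≠ 0) :
    ∑ i ∈ Finset.range (Fintype.card K - 1), w ^ i = if w = 1 then -1 else 0 := by
  have hq2 : 1 < Fintype.card K := Fintype.one_lt_card
  split_ifs with h
  · subst h
    simp [Nat.cast_sub hq2.le]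
  · have := mul_geom_sum w (Fintype.card K - 1)
    rw [FiniteField.pow_card_sub_one_eq_one _ hw, sub_self] at this
    exact (mul_eq_zero.1 this).resolve_left (sub_ne_zero.2 h)

theorem regProp_glue [Fintype σ] {e₀ : σ} (hp : ∀ e, p e ↔ e = e₀)
    {A : Set (σ → K)} {A' : Set ({e : σ // ¬ p e} → K)}
    (hA : ∀ a ∈ A, ∃ y ∈ A', ∃ z : Kˣ, a = glue y (z : K))
    (e₁ : {e : σ // ¬ p e}) (hA' : ∀ a ∈ A', a e₁ ≠ 0) {d : ℕ} (h : RegProp K A' d) :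
    RegProp K A (d + (Fintype.card K - 2)) := by
  classical
  have hq2 : 1 < Fintype.card K := Fintype.one_lt_card
  intro f hf
  have key : ∀ i : ℕ, i < Fintype.card K - 1 →
      ∃ F : MvPolynomial {e : σ // ¬ p e} K, F.IsHomogeneous (d + (Fintype.card K - 2 - i)) ∧
        ∀ a ∈ A', eval a F = - ∑ u : Kˣ, ((u : K)⁻¹) ^ i * f (glue a (u : K)) := by
    intro i hi
    refine regProp_add e₁ hA' h (Fintype.card K - 2 - i) _ ?_
    intro c b
    rw [mul_neg, ← Equiv.sum_comp (Equiv.mulLeft c), Finset.mul_sum]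
    congr 1
    refine Finset.sum_congr rfl fun u _ => ?_
    have hc : (c : K) ≠ 0 := c.ne_zero
    have hu : (u : K) ≠ 0 := u.ne_zero
    rw [Equiv.coe_mulLeft, Units.val_mul, glue_smul, hf,
      show d + (Fintype.card K - 2) = d + (Fintype.card K - 2 - i) + i by omega, pow_add _ _ i,
      mul_inv, mul_pow, inv_pow (c : K)]
    generalize f (glue b (u : K)) = t
    field_simp
  choose! F hF hFa using key
  refine ⟨∑ i ∈ Finset.range (Fintype.card K - 1), rename Subtype.val (F i) * X e₀ ^ i, ?_, ?_⟩
  · refine IsHomogeneous.sum _ _ _ fun i hi => ?_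
    have hi' := Finset.mem_range.1 hi
    have h1 := ((hF i hi').rename_isHomogeneous (f := Subtype.val)).mul
      ((isHomogeneous_X K e₀).pow i)
    convert h1 using 1
    omega
  · intro a ha
    obtain ⟨y, hy, z, rfl⟩ := hA a ha
    have hz : (z : K) ≠ 0 := z.ne_zero
    rw [map_sum]
    have h1 : ∀ i ∈ Finset.range (Fintype.card K - 1),
        eval (glue y (z : K)) (rename Subtype.val (F i) * X e₀ ^ i) =
        ∑ u : Kˣ, - f (glue y (u : K)) * ((z : K) * (u : K)⁻¹) ^ i := by
      intro i hi
      rw [map_mul, eval_rename, glue_comp, hFa i (Finset.mem_range.1 hi) y hy, map_pow, eval_X,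
        glue_pos ((hp e₀).2 rfl), neg_mul, Finset.sum_mul, ← Finset.sum_neg_distrib]
      refine Finset.sum_congr rfl fun u _ => ?_
      rw [mul_pow]; ring
    rw [Finset.sum_congr rfl h1, Finset.sum_comm]
    simp_rw [← Finset.mul_sum]
    rw [Finset.sum_eq_single z]
    · rw [geom_units (by simp), if_pos (by simp)]; ring
    · intro u _ hu
      rw [geom_units (by simp), if_neg, mul_zero]
      intro hh
      apply hu
      ext
      have := (mul_inv_eq_one₀ u.ne_zero).1 hh
      exact this.symm
    · simp

theorem regProp_unglue [Fintype σ] {e₀ : σ} (hp : ∀ e, p e ↔ e = e₀)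
    {A : Set (σ → K)} {A' : Set ({e : σ // ¬ p e} → K)}
    (hA : ∀ y ∈ A', ∀ z : Kˣ, glue y (z : K) ∈ A) (hne : A'.Nonempty)
    (e₁ : {e : σ // ¬ p e}) (hA' : ∀ a ∈ A', a e₁ ≠ 0) {d : ℕ} (h : RegProp K A d) :
    Fintype.card K - 2 ≤ d ∧ RegProp K A' (d - (Fintype.card K - 2)) := by
  classical
  have hq2 : 1 < Fintype.card K := Fintype.one_lt_card
  have key : ∀ g : ({e : σ // ¬ p e} → K) → K,
      (∀ (c : Kˣ) (b : {e : σ // ¬ p e} → K), g (c • b) = (c : K) ^ (d + 1) * g b) →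
      ∃ F : MvPolynomial σ K, F.IsHomogeneous d ∧ ∀ y ∈ A', g y =
        ∑ m ∈ F.support with (Fintype.card K - 1 ∣ m e₀ + 1),
          coeff m F * ∏ i : {e : σ // ¬ p e}, y i ^ m i.1 := by
    intro g hg
    obtain ⟨F, hF, hFa⟩ := h (fun b => g (b ∘ Subtype.val) * b e₀ ^ (Fintype.card K - 2)) (by
      intro c b
      have h1 : (c • b) ∘ Subtype.val = c • (b ∘ (Subtype.val : {e : σ // ¬ p e} → σ)) := rfl
      have h2 : (c : K) ^ (Fintype.card K - 1) = 1 :=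
        FiniteField.pow_card_sub_one_eq_one _ c.ne_zero
      rw [h1, hg]
      simp only [Pi.smul_apply, Units.smul_def, smul_eq_mul, mul_pow]
      have h3 : (c : K) ^ (d + 1) * (c : K) ^ (Fintype.card K - 2) = (c : K) ^ d := by
        rw [← pow_add, show d + 1 + (Fintype.card K - 2) = d + (Fintype.card K - 1) by omega,
          pow_add, h2, mul_one]
      rw [← h3]; ring)
    refine ⟨F, hF, fun y hy => ?_⟩
    have h1 : ∑ z : Kˣ, (z : K) * eval (glue y (z : K)) F = - g y := by
      have : ∀ z : Kˣ, (z : K) * eval (glue y (z : K)) F = g y := by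
        intro z
        rw [hFa _ (hA y hy z)]
        simp only [glue_comp, glue_pos ((hp e₀).2 rfl)]
        have h2 : (z : K) ^ (Fintype.card K - 2) * z = 1 := by
          rw [← pow_succ, show Fintype.card K - 2 + 1 = Fintype.card K - 1 by omega]
          exact FiniteField.pow_card_sub_one_eq_one _ z.ne_zero
        rw [mul_comm, mul_assoc, h2, mul_one]
      rw [Finset.sum_congr rfl fun z _ => this z]
      simp [Fintype.card_units, Nat.cast_sub hq2.le]
    have h2 : ∀ z : Kˣ, (z : K) * eval (glue y (z : K)) F =
        ∑ m ∈ F.support, (coeff m F * ∏ i : {e : σ // ¬ p e}, y i ^ m i.1) *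
          (z : K) ^ (m e₀ + 1) := by
      intro z
      rw [eval_eq', Finset.mul_sum]
      refine Finset.sum_congr rfl fun m _ => ?_
      rw [prod_split hp]
      simp only [glue_coe, glue_pos ((hp e₀).2 rfl)]
      ring
    rw [Finset.sum_congr rfl fun z _ => h2 z, Finset.sum_comm] at h1
    simp_rw [← Finset.mul_sum] at h1
    rw [← neg_inj, ← h1, Finset.sum_filter, ← Finset.sum_neg_distrib]
    refine Finset.sum_congr rfl fun m _ => ?_
    have h3 := FiniteField.sum_pow_units K (m e₀ + 1)
    rw [h3]
    split_ifs <;> ring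
  have hdeg : ∀ {F : MvPolynomial σ K}, F.IsHomogeneous d → ∀ m ∈ F.support,
      m e₀ + ∑ i : {e : σ // ¬ p e}, m i.1 = d := by
    intro F hF m hm
    rw [← sum_split hp (fun i => m i), ← Finsupp.degree_eq_sum, Finsupp.degree_eq_weight_one]
    exact hF (mem_support_iff.1 hm)
  have hle : Fintype.card K - 2 ≤ d := by
    by_contra hlt
    obtain ⟨F, hF, hFa⟩ := key (fun b => b e₁ ^ (d + 1)) (by
      intro c b; simp [Units.smul_def, mul_pow])
    obtain ⟨y, hy⟩ := hne
    have h1 := hFa y hy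
    rw [Finset.sum_eq_zero] at h1
    · exact pow_ne_zero _ (hA' y hy) h1
    · intro m hm
      exfalso
      obtain ⟨hm, hdv⟩ := Finset.mem_filter.1 hm
      have := hdeg hF m hm
      have := Nat.le_of_dvd (by omega) hdv
      omega
  refine ⟨hle, fun g hg => ?_⟩
  obtain ⟨F, hF, hFa⟩ := key g (by
    intro c b
    rw [hg, show d + 1 = d - (Fintype.card K - 2) + (Fintype.card K - 1) by omega, pow_add _ _ (Fintype.card K - 1),
      FiniteField.pow_card_sub_one_eq_one _ c.ne_zero, mul_one])
  refine ⟨∑ m ∈ F.support with (Fintype.card K - 1 ∣ m e₀ + 1),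
    monomial (Finsupp.equivFunOnFinite.symm (fun i : {e : σ // ¬ p e} => m i.1) +
      Finsupp.single e₁ (m e₀ - (Fintype.card K - 2))) (coeff m F), ?_, ?_⟩
  · refine IsHomogeneous.sum _ _ _ fun m hm => isHomogeneous_monomial _ ?_
    obtain ⟨hm, hdv⟩ := Finset.mem_filter.1 hm
    have h1 := hdeg hF m hm
    have h2 := Nat.le_of_dvd (by omega) hdv
    rw [map_add, Finsupp.degree_single, Finsupp.degree_eq_sum]
    simp only [Finsupp.equivFunOnFinite_symm_apply_apply]
    omega
  · intro a ha
    have hae := hA' a ha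
    rw [hFa a ha, map_sum]
    refine Finset.sum_congr rfl fun m hm => ?_
    obtain ⟨hm, k, hk⟩ := Finset.mem_filter.1 hm
    have h2 := Nat.le_of_dvd (by omega) (Dvd.intro k hk.symm)
    have hk' : m e₀ - (Fintype.card K - 2) = (Fintype.card K - 1) * (k - 1) := by
      rw [Nat.mul_sub, mul_one, ← hk]; omega
    rw [eval_monomial, Finsupp.prod_fintype _ _ (by simp)]
    simp only [Finsupp.add_apply, pow_add, Finset.prod_mul_distrib,
      Finsupp.equivFunOnFinite_symm_apply_apply]
    rw [Finset.prod_eq_single (a := e₁) (f := fun i => a i ^ (Finsupp.single e₁ _) i)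
      (by intro b _ hb; simp [Finsupp.single_eq_of_ne hb]) (by simp)]
    rw [Finsupp.single_eq_same, hk', pow_mul, FiniteField.pow_card_sub_one_eq_one _ hae, one_pow,
      mul_one]

end Glue

/-- **Proposition 2.5.**  Let `v` be a vertex of degree `1` of `G` and assume
`|E_G| > 1`.  If `G' = G - v` has no isolated vertices, then
`reg G = reg G' + (q-2)`, where `q = |K|`. -/
theorem reg_deleteVert_degree_one
    {V E : Type} [Fintype V] [DecidableEq V] [Fintype E] [DecidableEq E]
    (K : Type) [Field K] [Fintype K]
    (G : Multigraph V E) (hG : G.NoIsolated) (v : V)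
    (hv : G.degree v = 1) (hE : 1 < Fintype.card E)
    (hG' : (G.deleteVert v).NoIsolated) :
    G.reg K = (G.deleteVert v).reg K + (Fintype.card K - 2) := by
  classical
  obtain ⟨e₀, he₀⟩ : ∃ e₀, ∀ e, G.Incident v e ↔ e = e₀ := by
    obtain ⟨hs, ⟨e₀, h₀⟩⟩ := Nat.card_eq_one_iff_unique.1 hv
    refine ⟨e₀, fun e => ⟨fun h => ?_, fun h => h ▸ h₀⟩⟩
    exact congrArg Subtype.val (hs.elim ⟨e, h⟩ ⟨e₀, h₀⟩)
  obtain ⟨e₁, he₁⟩ : ∃ e₁, e₁ ≠ e₀ := by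
    have := Fintype.one_lt_card_iff_nontrivial.1 hE
    exact exists_ne e₀
  have he₁' : ¬ G.Incident v e₁ := fun h => he₁ ((he₀ e₁).1 h)
  -- the other endpoint of `e₀`
  obtain ⟨w, hwv, hw⟩ : ∃ w, w ≠ v ∧ ∀ x : V → Kˣ, G.point K x e₀ = (x v : K) * (x w : K) := by
    rcases (he₀ e₀).2 rfl with h | h
    · exact ⟨G.snd e₀, fun h' => G.ne e₀ (h.trans h'.symm), fun x => by simp [Multigraph.point, h]⟩
    · exact ⟨G.fst e₀, fun h' => G.ne e₀ (h'.trans h.symm),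
        fun x => by simp [Multigraph.point, h, mul_comm]⟩
  have hglue : ∀ x : V → Kˣ, G.point K x =
      glue ((G.deleteVert v).point K (fun u => x u.1)) ((x v * x w : Kˣ) : K) := by
    intro x
    ext e
    by_cases h : G.Incident v e
    · rw [glue_pos h, (he₀ e).1 h, hw]; simp
    · rw [glue_coe ⟨e, h⟩]; rfl
  have hA1 : ∀ a ∈ Set.range (G.point K), ∃ y ∈ Set.range ((G.deleteVert v).point K),
      ∃ z : Kˣ, a = glue y (z : K) := by
    rintro _ ⟨x, rfl⟩
    exact ⟨_, ⟨_, rfl⟩, _, hglue x⟩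
  have hA2 : ∀ y ∈ Set.range ((G.deleteVert v).point K), ∀ z : Kˣ,
      glue y (z : K) ∈ Set.range (G.point K) := by
    rintro _ ⟨x, rfl⟩ z
    refine ⟨fun u => if h : u = v then z * (x ⟨w, hwv⟩)⁻¹ else x ⟨u, h⟩, ?_⟩
    rw [hglue]
    congr 1
    · congr 1
      ext u
      simp [u.2]
    · simp [hwv]
  have hz := (G.deleteVert v).point_ne_zero (K := K) ⟨e₁, he₁'⟩
  have hset : ∀ d, d ∈ {d : ℕ | G.hilbert K d = (G.toricSet K).ncard} ↔
      Fintype.card K - 2 ≤ d ∧ d - (Fintype.card K - 2) ∈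
        {d : ℕ | (G.deleteVert v).hilbert K d = ((G.deleteVert v).toricSet K).ncard} := by
    intro d
    simp only [Set.mem_ofPred_eq]
    rw [G.hilbert_eq_iff_s5 K e₀ d, (G.deleteVert v).hilbert_eq_iff_s5 K ⟨e₁, he₁'⟩]
    constructor
    · intro h
      exact regProp_unglue he₀ hA2 (Set.range_nonempty _) ⟨e₁, he₁'⟩ hz h
    · rintro ⟨hd, h⟩
      have := regProp_glue he₀ hA1 ⟨e₁, he₁'⟩ hz h
      rwa [Nat.sub_add_cancel hd] at this
  have hne : {d : ℕ | (G.deleteVert v).hilbert K d =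
      ((G.deleteVert v).toricSet K).ncard}.Nonempty := by
    obtain ⟨d, hd⟩ := regProp_exists (K := K) (⟨e₁, he₁'⟩ : {e : E // ¬ G.Incident v e}) hz
    exact ⟨d, ((G.deleteVert v).hilbert_eq_iff_s5 K ⟨e₁, he₁'⟩ d).2 hd⟩
  unfold Multigraph.reg
  apply le_antisymm
  · apply Nat.sInf_le
    rw [hset, Nat.add_sub_cancel]
    exact ⟨Nat.le_add_left _ _, Nat.sInf_mem hne⟩
  · obtain ⟨d', hd'⟩ := hne
    have hne' : {d : ℕ | G.hilbert K d = (G.toricSet K).ncard}.Nonempty :=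
      ⟨d' + (Fintype.card K - 2), by rw [hset, Nat.add_sub_cancel]; exact ⟨Nat.le_add_left _ _, hd'⟩⟩
    obtain ⟨h1, h2⟩ := (hset _).1 (Nat.sInf_mem hne')
    have := Nat.sInf_le h2
    omega
end
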